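/- arXiv:0912.2152 — 2 statements merged into one kernel-verified Lean document; each statement's English description precedes it below -/
import Mathlib

section
/- Let k be a field, d an even integer with d ≥ 4, and m an integer with d+1 < m; set a = (d+2)/2. In R = k[x_1,…,x_m,z] let I = I_{a,1,m−1} + I_{a,2,m} and J = I_{a−1,2,m−1} + z·I_{a−2,3,m−2}, and let J̄ denote the image of J in R/I, an ideal of R/I regarded as an R/I-module. Then: (1) there exists a unique R/I-linear map φ : J̄ → R/I such that φ(v + I) = 0 for every v ∈ I_{a−1,2,m−1} and φ(zw + I) = x_1x_m·w + I for every w ∈ I_{a−2,3,m−2}; and (2) the R/I-module Hom_{R/I}(J̄, R/I) is generated by the inclusion map ι : J̄ → R/I together with φ. -/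
set_option synthInstance.maxHeartbeats 1000000
set_option maxHeartbeats 1000000

/-- The variable `x_t` (1-indexed, for `1 ≤ t ≤ n`) of the polynomial ring
`k[x_1, …, x_n]`, realized as `MvPolynomial (Fin n) k`. -/
noncomputable def Xv (k : Type*) [Field k] (n t : ℕ) : MvPolynomial (Fin n) k :=
  if h : 1 ≤ t ∧ t ≤ n then MvPolynomial.X ⟨t - 1, by omega⟩ else 0

/-- The ideal `I_{a,p,q}` of `k[x_1, …, x_n]`, generated by the squarefree monomials
`x_{t_1} ⋯ x_{t_a}` with `p ≤ t_1 < t_2 < ⋯ < t_a ≤ q` and `t_{j+1} ≥ t_j + 2`. -/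
noncomputable def idealI (k : Type*) [Field k] (n a p q : ℕ) :
    Ideal (MvPolynomial (Fin n) k) :=
  Ideal.span { f | ∃ t : ℕ → ℕ, p ≤ t 0 ∧ t (a - 1) ≤ q ∧
    (∀ j, j + 1 < a → t j + 2 ≤ t (j + 1)) ∧
    f = ∏ j ∈ Finset.range a, Xv k n (t j) }

/-!
The generators of `I` are the squarefree monomials of the cyclically sparse `(c + 1)`-element
subsets of `{1, …, m}`, `c = a - 1`, so a polynomial lies in `I` exactly when its coefficients
vanish at every exponent whose support is a face, that is, contains at most `c` cyclically
non-adjacent elements of `{1, …, m}`. By Gale's evenness criterion the facets are the unions of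
`c` disjoint cyclic pairs `{x, x + 1}`.

A homomorphism `ψ : J̄ → R/I` is a family of values `f_A` at the generators `x^A` of `J` with
`x^B f_A ≡ x^A f_B` modulo `I`. Read coefficientwise on faces, these relations force `x^s ∣ f_s` for
the generators `x^s` of `I_{a-1,2,m-1}` and identify the quotients `f_s / x^s` and `f_t / x^t` at
any exponent for which some facet contains both `s` and `t`. The facets avoiding the pair `{m, 1}`
are connected by shifting pairs one step, so all `f_s` come from a single multiple `C ι`. After
subtracting `C ι`, the values at `z x^t` are divisible by `x_1 x_m x^t`, and the facets using the
pair `{m, 1}` are connected in the same way; this yields a single multiple `C' φ`. The map `φ` is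
well defined because no face contains `s ∪ t ∪ {1, m}` for generators `x^s` of `I_{a-1,2,m-1}` and
`x^t` of `I_{a-2,3,m-2}`.
-/

section Sparse

open Finset

variable {α : Type*} {σ : α → α} {A B E X Y : Finset α} {b c : ℕ}

/-- A set is sparse for a successor map `σ` if it contains no pair `{x, σ x}`. For `σ = Nat.succ`
these are the index sets of the monomials generating `I_{a,p,q}`. -/
def Sparse (σ : α → α) (A : Finset α) : Prop := ∀ x ∈ A, σ x ∉ A

instance [DecidableEq α] : DecidablePred (Sparse σ) :=
  fun A => inferInstanceAs (Decidable (∀ x ∈ A, σ x ∉ A))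

/-- The bound `c` on the cardinality of the sparse subsets of `X`. -/
def SparseCardLE (σ : α → α) (X : Finset α) (c : ℕ) : Prop := ∀ A ⊆ X, Sparse σ A → #A ≤ c

/-- The union of the pairs `{x, σ x}` with `x ∈ E`; such unions are the facets in Gale's evenness
criterion. -/
def pairUnion [DecidableEq α] (σ : α → α) (E : Finset α) : Finset α := E ∪ E.image σ

theorem Sparse.subset (hB : Sparse σ B) (h : A ⊆ B) : Sparse σ A :=
  fun x hx hσ => hB x (h hx) (h hσ)

theorem SparseCardLE.mono (hY : SparseCardLE σ Y c) (h : X ⊆ Y) : SparseCardLE σ X c :=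
  fun A hA => hY A (hA.trans h)

variable [DecidableEq α]

theorem mem_pairUnion {x : α} : x ∈ pairUnion σ E ↔ x ∈ E ∨ ∃ y ∈ E, σ y = x := by
  simp [pairUnion]

theorem pairUnion_insert (x : α) :
    pairUnion σ (insert x E) = insert x (insert (σ x) (pairUnion σ E)) := by
  ext y
  simp only [pairUnion, image_insert, mem_union, mem_insert]
  tauto

theorem pairUnion_congr {τ : α → α} (h : ∀ x ∈ E, σ x = τ x) : pairUnion σ E = pairUnion τ E := by
  rw [pairUnion, pairUnion, image_congr h]

theorem sparseCardLE_of_subset_pairUnion (h : X ⊆ pairUnion σ E) : SparseCardLE σ X #E := by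
  intro A hAX hA
  refine (card_le_card fun x hx => ?_).trans
    (card_image_le (s := E) (f := fun e => if e ∈ A then e else σ e))
  rcases mem_pairUnion.1 (h (hAX hx)) with hxE | ⟨e, he, rfl⟩
  · exact mem_image.2 ⟨x, hxE, if_pos hx⟩
  · exact mem_image.2 ⟨e, he, if_neg fun heA => hA e heA hx⟩

end Sparse

section Interval

open Finset

variable {A E E' X Y : Finset ℕ} {b p q x : ℕ}

theorem mem_pairUnion_succ : x ∈ pairUnion Nat.succ E ↔ x ∈ E ∨ ∃ y ∈ E, y + 1 = x :=
  mem_pairUnion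

/-- The sparse `b`-element subsets of the half-open interval `[p, q)`; the generators of `I_{a,p,q}`
are indexed by `sparseSets a p (q + 1)`. -/
def sparseSets (b p q : ℕ) : Finset (Finset ℕ) := {A ∈ (Ico p q).powersetCard b | Sparse Nat.succ A}

theorem mem_sparseSets :
    A ∈ sparseSets b p q ↔ (∀ x ∈ A, p ≤ x ∧ x < q) ∧ #A = b ∧ Sparse Nat.succ A := by
  simp [sparseSets, subset_iff, and_assoc]

theorem subset_Icc_of_mem_sparseSets {p' q' : ℕ} (hA : A ∈ sparseSets b p q) (hp : p' ≤ p)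
    (hq : q ≤ q' + 1) : A ⊆ Icc p' q' := fun x hx => by
  have := (mem_sparseSets.1 hA).1 x hx
  exact mem_Icc.2 (by omega)

theorem two_mul_card_le_of_mem_sparseSets (hA : A ∈ sparseSets b p q) : 2 * b ≤ q + 1 - p := by
  obtain ⟨hpq, rfl, hsp⟩ := mem_sparseSets.1 hA
  have hdisj : Disjoint A (A.image Nat.succ) := by
    rw [disjoint_left]
    rintro _ hx hx'
    obtain ⟨y, hy, rfl⟩ := mem_image.1 hx'
    exact hsp y hy hx
  have hsub : pairUnion Nat.succ A ⊆ Ico p (q + 1) := by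
    intro x hx
    rcases mem_pairUnion_succ.1 hx with hx | ⟨y, hy, rfl⟩
    · have := hpq x hx
      exact mem_Ico.2 (by omega)
    · have := hpq y hy
      exact mem_Ico.2 (by omega)
  have hcard := card_le_card hsub
  rw [pairUnion, card_union_of_disjoint hdisj, card_image_of_injective _ Nat.succ_injective,
    Nat.card_Ico] at hcard
  omega

theorem insert_mem_sparseSets (hA : A ∈ sparseSets b (x + 2) q) (hp : p ≤ x) (hq : x < q) :
    insert x A ∈ sparseSets (b + 1) p q := by
  obtain ⟨hxq, rfl, hsp⟩ := mem_sparseSets.1 hA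
  have hxA : x ∉ A := fun h => by have := hxq x h; omega
  refine mem_sparseSets.2 ⟨fun y hy => ?_, card_insert_of_notMem hxA, fun y hy hy' => ?_⟩
  · rcases mem_insert.1 hy with rfl | hy
    · omega
    · have := hxq y hy
      omega
  · rcases mem_insert.1 hy with rfl | hy <;> rcases mem_insert.1 hy' with h | hy'
    · omega
    · have := hxq _ hy'
      omega
    · have := hxq y hy
      omega
    · exact hsp y hy hy'

theorem erase_mem_sparseSets (hE : E ∈ sparseSets (b + 1) p q) (hp : p ∈ E) :
    E.erase p ∈ sparseSets b (p + 2) q := by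
  obtain ⟨hpq, hcard, hsp⟩ := mem_sparseSets.1 hE
  refine mem_sparseSets.2 ⟨fun y hy => ?_, by rw [card_erase_of_mem hp, hcard, Nat.add_sub_cancel],
    hsp.subset (erase_subset _ _)⟩
  obtain ⟨hyp, hy⟩ := mem_erase.1 hy
  have hyp' : y ≠ p + 1 := by
    rintro rfl
    exact hsp p hp hy
  have := hpq y hy
  omega

theorem mem_sparseSets_succ_left (hE : E ∈ sparseSets b p q) (hp : p ∉ E) :
    E ∈ sparseSets b (p + 1) q := by
  obtain ⟨hpq, hcard, hsp⟩ := mem_sparseSets.1 hE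
  refine mem_sparseSets.2 ⟨fun y hy => ?_, hcard, hsp⟩
  have hyp : y ≠ p := fun h => hp (h ▸ hy)
  have := hpq y hy
  omega

theorem eq_of_mem_sparseSets (hA : A ∈ sparseSets b p q) (hE : E ∈ sparseSets b p q)
    (hpq : q ≤ p + 1) : A = E := by
  obtain ⟨hApq, rfl, -⟩ := mem_sparseSets.1 hA
  obtain ⟨hEpq, hcard, -⟩ := mem_sparseSets.1 hE
  refine eq_of_subset_of_card_le (fun x hx => ?_) hcard.le
  obtain ⟨y, hy⟩ : E.Nonempty := card_pos.1 (hcard ▸ card_pos.2 ⟨x, hx⟩)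
  have := hApq x hx
  have := hEpq y hy
  rwa [show x = y by omega]

theorem sparseSets_mono {p' q' : ℕ} (hp : p' ≤ p) (hq : q ≤ q') :
    sparseSets b p q ⊆ sparseSets b p' q' := fun A hA => by
  rw [mem_sparseSets] at hA ⊢
  exact ⟨fun x hx => ⟨hp.trans (hA.1 x hx).1, (hA.1 x hx).2.trans_le hq⟩, hA.2⟩

theorem insert_subset_pairUnion_insert (h : A ⊆ pairUnion Nat.succ E) :
    insert (x + 1) A ⊆ pairUnion Nat.succ (insert x E) := by
  rw [pairUnion_insert]
  exact (insert_subset_insert _ h).trans (subset_insert _ _)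

/-- The pairs of `E` that form an initial run `{p, p + 1}, {p + 2, p + 3}, …` move up by one. -/
theorem exists_shift {E : Finset ℕ} {b p q : ℕ} (hE : E ∈ sparseSets b p q) (hb : 2 * b + p ≤ q) :
    ∃ E' ∈ sparseSets b (p + 1) q, (pairUnion Nat.succ E).erase p ⊆ pairUnion Nat.succ E' ∧
      ∃ s ∈ sparseSets b (p + 1) q, s ⊆ pairUnion Nat.succ E ∧ s ⊆ pairUnion Nat.succ E' := by
  by_cases hp : p ∈ E
  · obtain ⟨b, rfl⟩ : ∃ b', b = b' + 1 :=
      Nat.exists_eq_add_one.2 ((mem_sparseSets.1 hE).2.1 ▸ card_pos.2 ⟨p, hp⟩)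
    obtain ⟨E₀, hE₀, hcov, s, hs, hsE, hsE₀⟩ :=
      exists_shift (erase_mem_sparseSets hE hp) (by omega)
    have hE_eq : pairUnion Nat.succ E =
        insert p (insert (p + 1) (pairUnion Nat.succ (E.erase p))) := by
      rw [← Nat.succ_eq_add_one, ← pairUnion_insert, insert_erase hp]
    refine ⟨insert (p + 1) E₀, insert_mem_sparseSets hE₀ le_rfl (by omega), ?_,
      insert (p + 1) s, insert_mem_sparseSets hs le_rfl (by omega), ?_, ?_⟩
    · rw [hE_eq, pairUnion_insert]
      intro x hx
      simp only [mem_erase, mem_insert] at hx ⊢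
      by_cases hx2 : x = p + 2
      · exact Or.inr (Or.inl hx2)
      · rcases hx.2 with h | h | h
        · exact absurd h hx.1
        · exact Or.inl h
        · exact Or.inr (Or.inr (hcov (mem_erase.2 ⟨hx2, h⟩)))
    · rw [← insert_erase hp]
      exact insert_subset_pairUnion_insert hsE
    · rw [pairUnion_insert]
      exact insert_subset_insert _ (hsE₀.trans (subset_insert _ _))
  · have hE' := mem_sparseSets_succ_left hE hp
    exact ⟨E, hE', erase_subset _ _, E, hE', subset_union_left, subset_union_left⟩
termination_by b

/-- The sets `E` indexing `b` disjoint pairs `{x, x + 1} ⊆ [p, q]` that together contain the part of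
`X` lying in `[p, q]`. -/
def pairCovers (X : Finset ℕ) (b p q : ℕ) : Finset (Finset ℕ) :=
  {E ∈ sparseSets b p q | X ∩ Icc p q ⊆ pairUnion Nat.succ E}

theorem mem_pairCovers : E ∈ pairCovers X b p q ↔
    E ∈ sparseSets b p q ∧ ∀ x ∈ X, p ≤ x → x ≤ q → x ∈ pairUnion Nat.succ E := by
  simp [pairCovers, subset_iff]

theorem pairCovers_anti (h : X ⊆ Y) : pairCovers Y b p q ⊆ pairCovers X b p q := fun E hE => by
  rw [mem_pairCovers] at hE ⊢
  exact ⟨hE.1, fun x hx => hE.2 x (h hx)⟩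

theorem mem_pairCovers_union (hA : A ⊆ Icc p q) :
    E ∈ pairCovers (X ∪ A) b p q ↔ E ∈ pairCovers X b p q ∧ A ⊆ pairUnion Nat.succ E := by
  rw [pairCovers, pairCovers, mem_filter, mem_filter, union_inter_distrib_right,
    inter_eq_left.2 hA, union_subset_iff, and_assoc]

theorem insert_mem_pairCovers (hE : E ∈ pairCovers X b (p + 2) q) (hpq : p < q) :
    insert p E ∈ pairCovers X (b + 1) p q := by
  obtain ⟨hE, hcov⟩ := mem_pairCovers.1 hE
  refine mem_pairCovers.2 ⟨insert_mem_sparseSets hE le_rfl hpq, fun x hx hpx hxq => ?_⟩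
  rw [pairUnion_insert, mem_insert, mem_insert]
  by_cases h : p + 2 ≤ x
  · exact Or.inr (Or.inr (hcov x hx h hxq))
  · rw [Nat.succ_eq_add_one]
    omega

theorem erase_mem_pairCovers (hE : E ∈ pairCovers X (b + 1) p q) (hp : p ∈ E) :
    E.erase p ∈ pairCovers X b (p + 2) q := by
  obtain ⟨hE, hcov⟩ := mem_pairCovers.1 hE
  refine mem_pairCovers.2 ⟨erase_mem_sparseSets hE hp, fun x hx hpx hxq => ?_⟩
  have h := hcov x hx (by omega) hxq
  rw [← insert_erase hp, pairUnion_insert, mem_insert, mem_insert, Nat.succ_eq_add_one] at h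
  rcases h with h | h | h
  · omega
  · omega
  · exact h

theorem notMem_of_mem_pairCovers (hE : E ∈ pairCovers X b p q) (hp : p ∉ E) (hpq : p ≤ q) :
    p ∉ X := by
  intro hpX
  obtain ⟨hE, hcov⟩ := mem_pairCovers.1 hE
  rcases mem_pairUnion_succ.1 (hcov p hpX le_rfl hpq) with h | ⟨y, hy, hyp⟩
  · exact hp h
  · have := (mem_sparseSets.1 hE).1 y hy
    omega

theorem mem_pairCovers_succ_left (hE : E ∈ pairCovers X b p q) (hp : p ∉ E) :
    E ∈ pairCovers X b (p + 1) q := by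
  obtain ⟨hE, hcov⟩ := mem_pairCovers.1 hE
  exact mem_pairCovers.2 ⟨mem_sparseSets_succ_left hE hp, fun x hx hpx => hcov x hx (by omega)⟩

theorem mem_pairCovers_of_notMem (hE : E ∈ pairCovers X b (p + 1) q) (hp : p ∉ X) :
    E ∈ pairCovers X b p q := by
  obtain ⟨hE, hcov⟩ := mem_pairCovers.1 hE
  refine mem_pairCovers.2 ⟨sparseSets_mono (by omega) le_rfl hE, fun x hx hpx => ?_⟩
  have hxp : x ≠ p := fun h => hp (h ▸ hx)
  exact hcov x hx (by omega)

/-- Gale's evenness criterion on a line. The greedy choice works: the pair `{p, p + 1}` is used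
unless `X ∩ [p + 2, q]` still needs `b + 1` pairs, and in that case `p ∉ X`. -/
theorem exists_mem_pairCovers {X : Finset ℕ} {b p q : ℕ}
    (hX : SparseCardLE Nat.succ (X ∩ Icc p q) b) (hb : 2 * b + p ≤ q + 1) :
    ∃ E, E ∈ pairCovers X b p q := by
  obtain _ | b := b
  · refine ⟨∅, mem_pairCovers.2 ⟨by simp [mem_sparseSets, Sparse], fun x hx hpx hxq => ?_⟩⟩
    have := hX {x} (by simp [hx, hpx, hxq]) (by simp [Sparse])
    simp at this
  by_cases h : SparseCardLE Nat.succ (X ∩ Icc (p + 2) q) b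
  · obtain ⟨E, hE⟩ := exists_mem_pairCovers h (by omega)
    exact ⟨_, insert_mem_pairCovers hE (by omega)⟩
  · obtain ⟨A, hAX, hA, hbA⟩ : ∃ A ⊆ X ∩ Icc (p + 2) q, Sparse Nat.succ A ∧ b < #A := by
      simpa [SparseCardLE] using h
    have hAq : A ∈ sparseSets #A (p + 2) (q + 1) := mem_sparseSets.2 ⟨fun x hx => by
      have := mem_Icc.1 (mem_inter.1 (hAX hx)).2
      omega, rfl, hA⟩
    have hroom := two_mul_card_le_of_mem_sparseSets hAq
    have hpX : p ∉ X := by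
      intro hpX
      obtain ⟨-, hcard, hsp⟩ :=
        mem_sparseSets.1 (insert_mem_sparseSets hAq (le_refl p) (by omega))
      have := hX (insert p A) (insert_subset (by simp [hpX]; omega) (hAX.trans
        (inter_subset_inter_left (Icc_subset_Icc_left (by omega))))) hsp
      omega
    obtain ⟨E, hE⟩ := exists_mem_pairCovers (p := p + 1) (hX.mono
      (inter_subset_inter_left (Icc_subset_Icc_left (by omega)))) (by omega)
    exact ⟨E, mem_pairCovers_of_notMem hE hpX⟩
termination_by q + 1 - p

theorem exists_shift_mem_pairCovers (hE : E ∈ pairCovers X b p q) (hp : p ∉ X)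
    (hb : 2 * b + p ≤ q) :
    ∃ E' ∈ pairCovers X b (p + 1) q, ∃ s ∈ sparseSets b (p + 1) q,
      s ⊆ pairUnion Nat.succ E ∧ s ⊆ pairUnion Nat.succ E' := by
  obtain ⟨hE, hcov⟩ := mem_pairCovers.1 hE
  obtain ⟨E', hE', hEE', hs⟩ := exists_shift hE hb
  refine ⟨E', mem_pairCovers.2 ⟨hE', fun x hx hpx hxq => ?_⟩, hs⟩
  exact hEE' (mem_erase.2 ⟨fun h => hp (h ▸ hx), hcov x hx (by omega) hxq⟩)

/-- Any two covers are joined by a chain of covers in which neighbours share a generator: induct on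
`[p, q]`, after shifting pairs so that either both covers or neither of them use the pair
`{p, p + 1}`. -/
theorem eq_of_forall_linked {K : Sort*} {X E E' : Finset ℕ} {b p q : ℕ} (v : Finset ℕ → K)
    (hv : ∀ E ∈ pairCovers X b p q, ∀ E' ∈ pairCovers X b p q, ∀ s ∈ sparseSets b (p + 1) q,
      s ⊆ pairUnion Nat.succ E → s ⊆ pairUnion Nat.succ E' → v E = v E')
    (hE : E ∈ pairCovers X b p q) (hE' : E' ∈ pairCovers X b p q) : v E = v E' := by
  have hE_mem := (mem_pairCovers.1 hE).1
  have hE'_mem := (mem_pairCovers.1 hE').1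
  rcases le_or_gt q (p + 1) with hqp | hpq
  · rw [eq_of_mem_sparseSets hE_mem hE'_mem hqp]
  have eq_of_notMem : ∀ F ∈ pairCovers X b p q, ∀ F' ∈ pairCovers X b p q,
      p ∉ F → p ∉ F' → v F = v F' := fun F hF F' hF' hp hp' => by
    have hpX := notMem_of_mem_pairCovers hF hp (by omega)
    exact eq_of_forall_linked v (fun G hG G' hG' s hs => hv G (mem_pairCovers_of_notMem hG hpX) G'
        (mem_pairCovers_of_notMem hG' hpX) s (sparseSets_mono (by omega) le_rfl hs))
      (mem_pairCovers_succ_left hF hp) (mem_pairCovers_succ_left hF' hp')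
  have eq_of_mem_of_notMem : ∀ F ∈ pairCovers X b p q, ∀ F' ∈ pairCovers X b p q,
      p ∉ F' → v F = v F' := fun F hF F' hF' hp' => by
    have hpX := notMem_of_mem_pairCovers hF' hp' (by omega)
    have hroom := two_mul_card_le_of_mem_sparseSets
      (mem_sparseSets_succ_left (mem_pairCovers.1 hF').1 hp')
    obtain ⟨G, hG, s, hs, hsF, hsG⟩ := exists_shift_mem_pairCovers hF hpX (by omega)
    have hpG : p ∉ G := fun h => by
      have := (mem_sparseSets.1 (mem_pairCovers.1 hG).1).1 p h
      omega
    have hG := mem_pairCovers_of_notMem hG hpX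
    exact (hv F hF G hG s hs hsF hsG).trans (eq_of_notMem G hG F' hF' hpG hp')
  by_cases hp' : p ∈ E'
  · by_cases hp : p ∈ E
    · obtain ⟨b, rfl⟩ : ∃ b', b = b' + 1 :=
        Nat.exists_eq_add_one.2 ((mem_sparseSets.1 hE_mem).2.1 ▸ card_pos.2 ⟨p, hp⟩)
      have := eq_of_forall_linked (fun F => v (insert p F))
        (fun F hF F' hF' s hs hsF hsF' => hv _ (insert_mem_pairCovers hF (by omega)) _
          (insert_mem_pairCovers hF' (by omega)) _ (insert_mem_sparseSets hs le_rfl hpq)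
          (insert_subset_pairUnion_insert hsF) (insert_subset_pairUnion_insert hsF'))
        (erase_mem_pairCovers hE hp) (erase_mem_pairCovers hE' hp')
      simpa only [insert_erase hp, insert_erase hp'] using this
    · exact (eq_of_mem_of_notMem E' hE' E hE hp).symm
  · exact eq_of_mem_of_notMem E hE E' hE' hp'
termination_by q - p

theorem eq_of_forall_pairCovers {K : Sort*} {s s' : Finset ℕ} (v : Finset ℕ → K)
    (hv : ∀ E ∈ pairCovers X b p q, ∀ s ∈ sparseSets b (p + 1) q, ∀ s' ∈ sparseSets b (p + 1) q,
      s ⊆ pairUnion Nat.succ E → s' ⊆ pairUnion Nat.succ E → v s = v s')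
    (hE : E ∈ pairCovers X b p q) (hE' : E' ∈ pairCovers X b p q)
    (hs : s ∈ sparseSets b (p + 1) q) (hs' : s' ∈ sparseSets b (p + 1) q)
    (hsE : s ⊆ pairUnion Nat.succ E) (hsE' : s' ⊆ pairUnion Nat.succ E') : v s = v s' := by
  have key : ∀ F ∈ pairCovers X b p q, ∀ t ∈ sparseSets b (p + 1) q, t ⊆ pairUnion Nat.succ F →
      (fun x => ∃ u ∈ sparseSets b (p + 1) q, u ⊆ pairUnion Nat.succ F ∧ v u = x) = (v t = ·) :=
    fun F hF t ht htF => funext fun x => propext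
      ⟨fun ⟨u, hu, huF, hux⟩ => (hv F hF t ht u hu htF huF).trans hux, fun h => ⟨t, ht, htF, h⟩⟩
  have := eq_of_forall_linked
    (fun F x => ∃ u ∈ sparseSets b (p + 1) q, u ⊆ pairUnion Nat.succ F ∧ v u = x)
    (fun F hF F' hF' t ht htF htF' => (key F hF t ht htF).trans (key F' hF' t ht htF').symm) hE hE'
  rw [key E hE s hs hsE, key E' hE' s' hs' hsE'] at this
  exact (congrFun this (v s')).mpr rfl

end Interval

section Cyclic

open Finset

variable {A E X Y s t : Finset ℕ} {b c m n x y : ℕ}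

/-- The successor in the cyclic order on `{1, …, m}`. -/
def cycSucc (m x : ℕ) : ℕ := if x = m then 1 else x + 1

theorem cycSucc_self : cycSucc m m = 1 := if_pos rfl

theorem cycSucc_of_ne (h : x ≠ m) : cycSucc m x = x + 1 := if_neg h

/-- A set `X` is a face if the part of `X` in `{1, …, m}` has at most `c` cyclically non-adjacent
elements. Faces carry the monomials outside the ideal `I` with `a = c + 1`: its generators are the
monomials of the cyclically sparse sets with `c + 1` elements. Elements of `X` outside `{1, …, m}`
are ignored, so the variable `z` is a cone point. -/
def Face (m c : ℕ) (X : Finset ℕ) : Prop := SparseCardLE (cycSucc m) (X ∩ Icc 1 m) c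

theorem Face.mono (hY : Face m c Y) (h : X ⊆ Y) : Face m c X :=
  SparseCardLE.mono hY (inter_subset_inter_right h)

theorem face_congr (h : ∀ x ∈ Icc 1 m, x ∈ X ↔ x ∈ Y) : Face m c X ↔ Face m c Y := by
  have : X ∩ Icc 1 m = Y ∩ Icc 1 m := by
    ext x
    simpa only [mem_inter, and_congr_left_iff] using h x
  rw [Face, Face, this]

theorem face_insert_succ_union : Face m c (insert (m + 1) A ∪ X) ↔ Face m c (X ∪ A) :=
  face_congr fun x hx => by
    have hx := (mem_Icc.1 hx).2
    simp only [mem_union, mem_insert, show x ≠ m + 1 by omega, false_or, or_comm]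

/-- The `y`-th element after `n` in the cyclic order on `{1, …, m}`, for `y ≤ m`. -/
def rot (m n y : ℕ) : ℕ := if n + y ≤ m then n + y else n + y - m

theorem rot_mem_Icc (hn : n ∈ Icc 1 m) (hy : y ≤ m) : rot m n y ∈ Icc 1 m := by
  grind [rot]

theorem rot_injOn : Set.InjOn (rot m n) (Set.Iio m) := by
  intro x hx y hy h
  grind [rot]

theorem cycSucc_rot (hn : n ∈ Icc 1 m) (hy : y < m) : cycSucc m (rot m n y) = rot m n (y + 1) := by
  grind [rot, cycSucc]

theorem rot_ne (hy : y ∈ Ico 1 m) : rot m n y ≠ n := by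
  grind [rot]

theorem rot_self (hn : n ∈ Icc 1 m) : rot m n m = n := by
  grind [rot]

theorem exists_rot_eq (hn : n ∈ Icc 1 m) (hx : x ∈ Icc 1 m) (hxn : x ≠ n) :
    ∃ y ∈ Ico 1 m, rot m n y = x := by
  refine ⟨if n ≤ x then x - n else x + m - n, ?_, ?_⟩ <;> grind [rot]

theorem sparse_image_rot (hn : n ∈ Icc 1 m) (hE : E ⊆ Ico 1 m) (hsp : Sparse Nat.succ E) :
    Sparse (cycSucc m) (E.image (rot m n)) := by
  intro x hx hx'
  obtain ⟨y, hy, rfl⟩ := mem_image.1 hx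
  have hy1 := mem_Ico.1 (hE hy)
  rw [cycSucc_rot hn hy1.2, mem_image] at hx'
  obtain ⟨y', hy', h⟩ := hx'
  rcases eq_or_ne (y + 1) m with hym | hym
  · rw [hym, rot_self hn] at h
    exact rot_ne (hE hy') h
  · rw [rot_injOn (mem_Ico.1 (hE hy')).2 (Set.mem_Iio.2 (by omega)) h] at hy'
    exact hsp y hy hy'

theorem card_image_rot (hE : E ⊆ Ico 1 m) : #(E.image (rot m n)) = #E :=
  card_image_of_injOn (rot_injOn.mono fun _ hx => (mem_Ico.1 (hE hx)).2)

/-- Gale's evenness criterion. The cycle is cut open at a point `n ∉ X`. -/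
theorem Face.exists_subset_pairUnion (hX : Face m c X) (hn : n ∈ Icc 1 m) (hnX : n ∉ X)
    (hcm : 2 * c + 1 ≤ m) :
    ∃ E ⊆ Icc 1 m, Sparse (cycSucc m) E ∧ #E = c ∧ X ∩ Icc 1 m ⊆ pairUnion (cycSucc m) E ∧
      n ∉ pairUnion (cycSucc m) E := by
  set X' : Finset ℕ := {y ∈ Ico 1 m | rot m n y ∈ X}
  have hX' : SparseCardLE Nat.succ (X' ∩ Icc 1 (m - 1)) c := fun A hAX hA => by
    have hAX' := hAX.trans inter_subset_left
    have hAm := hAX'.trans (filter_subset _ _)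
    rw [← card_image_rot hAm]
    refine hX _ (fun x hx => ?_) (sparse_image_rot hn hAm hA)
    obtain ⟨y, hy, rfl⟩ := mem_image.1 hx
    exact mem_inter.2 ⟨(mem_filter.1 (hAX' hy)).2, rot_mem_Icc hn (mem_Ico.1 (hAm hy)).2.le⟩
  obtain ⟨E, hE⟩ := exists_mem_pairCovers hX' (by omega)
  obtain ⟨hE, hcov⟩ := mem_pairCovers.1 hE
  obtain ⟨hEm, rfl, hsp⟩ := mem_sparseSets.1 hE
  have hEm' : E ⊆ Ico 1 m := fun x hx => by
    have := hEm x hx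
    exact mem_Ico.2 (by omega)
  refine ⟨E.image (rot m n), fun x hx => ?_, sparse_image_rot hn hEm' hsp, card_image_rot hEm',
    fun x hx => ?_, fun h => ?_⟩
  · obtain ⟨y, hy, rfl⟩ := mem_image.1 hx
    exact rot_mem_Icc hn (mem_Ico.1 (hEm' hy)).2.le
  · obtain ⟨hxX, hxm⟩ := mem_inter.1 hx
    obtain ⟨y, hy, rfl⟩ := exists_rot_eq hn hxm fun h => hnX (h ▸ hxX)
    have hy1 := mem_Ico.1 hy
    rcases mem_pairUnion_succ.1 (hcov y (mem_filter.2 ⟨hy, hxX⟩) hy1.1 (by omega)) with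
      hyE | ⟨y, hyE, rfl⟩
    · exact mem_pairUnion.2 (Or.inl (mem_image_of_mem _ hyE))
    · exact mem_pairUnion.2 (Or.inr ⟨_, mem_image_of_mem _ hyE, cycSucc_rot hn (by omega)⟩)
  · obtain h | ⟨x, hx, h⟩ := mem_pairUnion.1 h
    · obtain ⟨y, hy, h⟩ := mem_image.1 h
      exact rot_ne (hEm' hy) h
    · obtain ⟨y, hy, rfl⟩ := mem_image.1 hx
      have := hEm y hy
      rw [cycSucc_rot hn (by omega)] at h
      exact rot_ne (mem_Ico.2 (by omega)) h

theorem pairUnion_cycSucc (h : m ∉ E) : pairUnion (cycSucc m) E = pairUnion Nat.succ E :=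
  pairUnion_congr fun _ hx => cycSucc_of_ne (ne_of_mem_of_not_mem hx h)

/-- The facets are of two kinds, according to whether `{m, 1}` is one of the pairs. -/
theorem Face.exists_pairCovers (hX : Face m (b + 1) X) (hn : n ∈ Icc 1 m) (hnX : n ∉ X)
    (hbm : 2 * b + 3 ≤ m) :
    (∃ E ∈ pairCovers X (b + 1) 1 m, n ∉ pairUnion Nat.succ E) ∨
      (1 < n ∧ n < m ∧ ∃ E ∈ pairCovers X b 2 (m - 1), n ∉ pairUnion Nat.succ E) := by
  obtain ⟨hn1, hnm⟩ := mem_Icc.1 hn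
  obtain ⟨E, hEm, hsp, hcard, hcov, hnE⟩ := hX.exists_subset_pairUnion hn hnX (by omega)
  by_cases hmE : m ∈ E
  · right
    have h1E : 1 ∉ E := fun h => hsp m hmE (cycSucc_self.symm ▸ h)
    have hm1E : m - 1 ∉ E := fun h => hsp (m - 1) h <| by
      rwa [cycSucc_of_ne (by omega), Nat.sub_add_cancel (by omega)]
    rw [← insert_erase hmE, pairUnion_insert, cycSucc_self, mem_insert, mem_insert,
      pairUnion_cycSucc (notMem_erase m E)] at hnE
    push Not at hnE
    refine ⟨by omega, by omega, E.erase m, mem_pairCovers.2 ⟨mem_sparseSets.2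
      ⟨fun x hx => ?_, by rw [card_erase_of_mem hmE, hcard, Nat.add_sub_cancel],
        fun x hx hx' => ?_⟩, fun x hx h2x hxm => ?_⟩, hnE.2.2⟩
    · obtain ⟨hxm, hx⟩ := mem_erase.1 hx
      have := mem_Icc.1 (hEm hx)
      have : x ≠ 1 := fun h => h1E (h ▸ hx)
      have : x ≠ m - 1 := fun h => hm1E (h ▸ hx)
      omega
    · exact hsp x (mem_of_mem_erase hx) (cycSucc_of_ne (ne_of_mem_erase hx) ▸ mem_of_mem_erase hx')
    · have h := hcov (mem_inter.2 ⟨hx, mem_Icc.2 (by omega)⟩)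
      rw [← insert_erase hmE, pairUnion_insert, cycSucc_self, mem_insert, mem_insert,
        pairUnion_cycSucc (notMem_erase m E)] at h
      exact (h.resolve_left (by omega)).resolve_left (by omega)
  · left
    rw [pairUnion_cycSucc hmE] at hcov hnE
    refine ⟨E, mem_pairCovers.2 ⟨mem_sparseSets.2 ⟨fun x hx => ?_, hcard, fun x hx => ?_⟩,
      fun x hx h1x hxm => hcov (mem_inter.2 ⟨hx, mem_Icc.2 ⟨h1x, hxm⟩⟩)⟩, hnE⟩
    · have := mem_Icc.1 (hEm hx)
      have : x ≠ m := fun h => hmE (h ▸ hx)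
      omega
    · have h := hsp x hx
      rwa [cycSucc_of_ne (ne_of_mem_of_not_mem hx hmE)] at h

theorem face_of_mem_pairCovers (hE : E ∈ pairCovers X c 1 m) : Face m c X := by
  obtain ⟨hE, hcov⟩ := mem_pairCovers.1 hE
  obtain ⟨hEm, rfl, -⟩ := mem_sparseSets.1 hE
  have hmE : m ∉ E := fun h => (hEm m h).2.false
  refine sparseCardLE_of_subset_pairUnion fun x hx => ?_
  obtain ⟨hx, hxm⟩ := mem_inter.1 hx
  rw [pairUnion_cycSucc hmE]
  exact hcov x hx (mem_Icc.1 hxm).1 (mem_Icc.1 hxm).2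

theorem face_succ_of_mem_pairCovers (hE : E ∈ pairCovers X b 2 (m - 1)) : Face m (b + 1) X := by
  obtain ⟨hE, hcov⟩ := mem_pairCovers.1 hE
  obtain ⟨hEm, rfl, -⟩ := mem_sparseSets.1 hE
  have hmE : m ∉ E := fun h => by have := (hEm m h).2; omega
  rw [← card_insert_of_notMem hmE]
  refine sparseCardLE_of_subset_pairUnion fun x hx => ?_
  obtain ⟨hx, hxm⟩ := mem_inter.1 hx
  have hxm := mem_Icc.1 hxm
  rw [pairUnion_insert, cycSucc_self, pairUnion_cycSucc hmE, mem_insert, mem_insert]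
  have := hcov x hx
  by_cases h : 2 ≤ x ∧ x ≤ m - 1
  · exact Or.inr (Or.inr (this h.1 h.2))
  · omega

theorem Face.exists_notMem (hX : Face m c X) (hcm : 2 * c + 2 ≤ m) : ∃ n ∈ Icc 1 m, n ∉ X := by
  by_contra! h
  have hcard := hX ((range (c + 1)).image (2 * · + 1)) (fun x hx => ?_) (fun x hx hx' => ?_)
  · rw [card_image_of_injective _ fun x y => by simp, card_range] at hcard
    omega
  · obtain ⟨i, hi, rfl⟩ := mem_image.1 hx
    have hi := mem_range.1 hi
    have hm : 2 * i + 1 ∈ Icc 1 m := mem_Icc.2 (by omega)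
    exact mem_inter.2 ⟨h _ hm, hm⟩
  · obtain ⟨i, hi, rfl⟩ := mem_image.1 hx
    obtain ⟨j, -, hj⟩ := mem_image.1 hx'
    have hi := mem_range.1 hi
    rw [cycSucc_of_ne (by omega)] at hj
    omega

theorem card_le_of_mem_pairCovers {p q p' q' : ℕ} (hE : E ∈ pairCovers X b p q)
    (hs : s ∈ sparseSets c p' q') (hp : p ≤ p') (hq : q' ≤ q + 1) (hsX : s ⊆ X) : c ≤ b := by
  obtain ⟨hE, hcov⟩ := mem_pairCovers.1 hE
  obtain ⟨hsm, rfl, hsp⟩ := mem_sparseSets.1 hs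
  rw [← (mem_sparseSets.1 hE).2.1]
  refine sparseCardLE_of_subset_pairUnion (fun x hx => hcov x (hsX hx) ?_ ?_) s subset_rfl hsp
  · exact hp.trans (hsm x hx).1
  · have := (hsm x hx).2
    omega

theorem Face.exists_pairCovers_of_union (hX : Face m (b + 1) (X ∪ s)) (hbm : 2 * b + 4 ≤ m)
    (hs : s ∈ sparseSets (b + 1) 2 m) :
    ∃ E ∈ pairCovers X (b + 1) 1 m, s ⊆ pairUnion Nat.succ E := by
  obtain ⟨n, hn, hnX⟩ := hX.exists_notMem (by omega)
  rcases hX.exists_pairCovers hn hnX (by omega) with ⟨E, hE, -⟩ | ⟨-, -, E, hE, -⟩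
  · exact ⟨E, (mem_pairCovers_union
      (subset_Icc_of_mem_sparseSets hs one_le_two (by omega))).1 hE⟩
  · have := card_le_of_mem_pairCovers hE hs le_rfl (by omega) subset_union_right
    omega

theorem card_lt_of_mem_pairCovers (hbm : 3 ≤ m) (hE : E ∈ pairCovers X b 1 m)
    (ht : t ∈ sparseSets c 3 (m - 1)) (htX : insert 1 (insert m t) ⊆ X) : c + 1 < b := by
  obtain ⟨hE, hcov⟩ := mem_pairCovers.1 hE
  obtain ⟨hEm, hcard, -⟩ := mem_sparseSets.1 hE
  obtain ⟨htm, rfl, hsp⟩ := mem_sparseSets.1 ht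
  simp only [insert_subset_iff] at htX
  have h1E : 1 ∈ E := by
    rcases mem_pairUnion_succ.1 (hcov 1 htX.1 le_rfl (by omega)) with h | ⟨y, hy, hy'⟩
    · exact h
    · have := hEm y hy
      omega
  have hmE : m - 1 ∈ E := by
    rcases mem_pairUnion_succ.1 (hcov m htX.2.1 (by omega) le_rfl) with h | ⟨y, hy, rfl⟩
    · exact absurd (hEm m h).2 (lt_irrefl m)
    · exact hy
  have hcov_t : t ⊆ pairUnion Nat.succ ((E.erase 1).erase (m - 1)) := fun x hx => by
    have := htm x hx
    rw [mem_pairUnion_succ]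
    refine (mem_pairUnion_succ.1 (hcov x (htX.2.2 hx) (by omega) (by omega))).imp
      (fun h => ?_) fun ⟨y, hy, hyx⟩ => ⟨y, ?_, hyx⟩ <;>
    exact mem_erase.2 ⟨by omega, mem_erase.2 ⟨by omega, by assumption⟩⟩
  have := sparseCardLE_of_subset_pairUnion hcov_t t subset_rfl hsp
  rw [card_erase_of_mem (mem_erase.2 ⟨by omega, hmE⟩), card_erase_of_mem h1E] at this
  have hpair := card_le_card (show {1, m - 1} ⊆ E by simp [insert_subset_iff, h1E, hmE])
  rw [card_pair (by omega)] at hpair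
  omega

theorem Face.exists_pairCovers_of_union_insert (hX : Face m (b + 1) (X ∪ insert 1 (insert m t)))
    (hbm : 2 * b + 4 ≤ m) (ht : t ∈ sparseSets b 3 (m - 1)) :
    ∃ E ∈ pairCovers X b 2 (m - 1), t ⊆ pairUnion Nat.succ E := by
  obtain ⟨n, hn, hnX⟩ := hX.exists_notMem (by omega)
  rcases hX.exists_pairCovers hn hnX (by omega) with ⟨E, hE, -⟩ | ⟨-, -, E, hE, -⟩
  · have := card_lt_of_mem_pairCovers (by omega) hE ht subset_union_right
    omega
  · have htX : X ∪ t ⊆ X ∪ insert 1 (insert m t) :=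
      union_subset_union_right ((subset_insert _ _).trans (subset_insert _ _))
    exact ⟨E, (mem_pairCovers_union (subset_Icc_of_mem_sparseSets ht (by omega) (by omega))).1
      (pairCovers_anti htX hE)⟩

theorem not_face_union (hbm : 2 * b + 4 ≤ m) (hs : s ∈ sparseSets (b + 1) 2 m)
    (ht : t ∈ sparseSets b 3 (m - 1)) : ¬ Face m (b + 1) (s ∪ insert 1 (insert m t)) := fun h => by
  obtain ⟨E, hE, -⟩ := h.exists_pairCovers_of_union_insert hbm ht
  have := card_le_of_mem_pairCovers hE hs le_rfl (by omega) subset_rfl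
  omega

theorem Face.exists_face_union (hX : Face m (b + 1) X) (hbm : 2 * b + 4 ≤ m) (hn : n ∈ Icc 1 m)
    (hnX : n ∉ X) :
    (∃ s ∈ sparseSets (b + 1) 2 m, n ∉ s ∧ Face m (b + 1) (X ∪ s)) ∨
      (1 < n ∧ n < m ∧ ∃ t ∈ sparseSets b 3 (m - 1), n ∉ t ∧ Face m (b + 1) (X ∪ t)) := by
  rcases hX.exists_pairCovers hn hnX (by omega) with ⟨E, hE, hnE⟩ | ⟨h1n, hnm, E, hE, hnE⟩
  · obtain ⟨-, -, -, s, hs, hsE, -⟩ := exists_shift (mem_pairCovers.1 hE).1 (by omega)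
    exact Or.inl ⟨s, hs, fun h => hnE (hsE h), face_of_mem_pairCovers ((mem_pairCovers_union
      (subset_Icc_of_mem_sparseSets hs one_le_two (by omega))).2 ⟨hE, hsE⟩)⟩
  · obtain ⟨-, -, -, t, ht, htE, -⟩ := exists_shift (mem_pairCovers.1 hE).1 (by omega)
    exact Or.inr ⟨h1n, hnm, t, ht, fun h => hnE (htE h),
      face_succ_of_mem_pairCovers ((mem_pairCovers_union
        (subset_Icc_of_mem_sparseSets ht (by omega) (by omega))).2 ⟨hE, htE⟩)⟩

end Cyclic

section Monomials

open Finset MvPolynomial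

variable {k : Type*} [Field k] {A B X : Finset ℕ} {a c m n p q x : ℕ}

/-- The exponent of the squarefree monomial `∏ x_t`, `t ∈ A`, of `k[x_1, …, x_n]`; elements of `A`
outside `{1, …, n}` are ignored. -/
noncomputable def expo (n : ℕ) (A : Finset ℕ) : Fin n →₀ ℕ :=
  Finsupp.equivFunOnFinite.symm fun i => if (i : ℕ) + 1 ∈ A then 1 else 0

/-- The set of indices `t ∈ {1, …, n}` of the variables `x_t` dividing `x^β`. -/
def varSet (β : Fin n →₀ ℕ) : Finset ℕ := β.support.image fun i : Fin n => (i : ℕ) + 1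

theorem expo_apply (i : Fin n) : expo n A i = if (i : ℕ) + 1 ∈ A then 1 else 0 := rfl

theorem mem_varSet {β : Fin n →₀ ℕ} : x ∈ varSet β ↔ ∃ i, β i ≠ 0 ∧ (i : ℕ) + 1 = x := by
  simp [varSet]

theorem exists_fin_succ_eq (hx : x ∈ Icc 1 n) : ∃ i : Fin n, (i : ℕ) + 1 = x := by
  have hx := mem_Icc.1 hx
  exact ⟨⟨x - 1, by omega⟩, Nat.sub_add_cancel hx.1⟩

theorem succ_mem_varSet {β : Fin n →₀ ℕ} {i : Fin n} : (i : ℕ) + 1 ∈ varSet β ↔ β i ≠ 0 := by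
  simp [varSet, Fin.val_inj]

theorem varSet_expo_add (β : Fin n →₀ ℕ) : varSet (expo n A + β) = A ∩ Icc 1 n ∪ varSet β := by
  ext x
  by_cases hx : x ∈ Icc 1 n
  · obtain ⟨i, rfl⟩ := exists_fin_succ_eq hx
    simp only [mem_union, mem_inter, succ_mem_varSet, hx, Finsupp.add_apply, expo_apply]
    split_ifs with h <;> simp [h]
  · have h : ∀ γ : Fin n →₀ ℕ, x ∉ varSet γ := fun γ h => by
      obtain ⟨i, -, rfl⟩ := mem_varSet.1 h
      exact hx (mem_Icc.2 (by omega))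
    simp [h, hx]

theorem expo_le_iff {β : Fin n →₀ ℕ} : expo n A ≤ β ↔ A ∩ Icc 1 n ⊆ varSet β := by
  refine ⟨fun h x hx => ?_, fun h i => ?_⟩
  · obtain ⟨hxA, hx⟩ := mem_inter.1 hx
    obtain ⟨i, rfl⟩ := exists_fin_succ_eq hx
    have := h i
    rw [expo_apply, if_pos hxA] at this
    exact succ_mem_varSet.2 (by omega)
  · rw [expo_apply]
    split_ifs with hi
    · exact Nat.one_le_iff_ne_zero.2
        (succ_mem_varSet.1 (h (mem_inter.2 ⟨hi, mem_Icc.2 (by omega)⟩)))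
    · exact Nat.zero_le _

theorem expo_empty : expo n ∅ = 0 := by
  ext i
  rw [expo_apply, if_neg (notMem_empty _), Finsupp.zero_apply]

theorem expo_insert (hx : x ∉ A) : expo n (insert x A) = expo n {x} + expo n A := by
  ext i
  simp only [expo_apply, Finsupp.add_apply, mem_insert, mem_singleton]
  by_cases hi : (i : ℕ) + 1 = x
  · simp [hi, hx]
  · simp [hi]

/-- The squarefree monomial `∏ x_t`, `t ∈ A`, of `k[x_1, …, x_n]`. -/
noncomputable abbrev sqfreeMonomial (k : Type*) [CommSemiring k] (n : ℕ) (A : Finset ℕ) :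
    MvPolynomial (Fin n) k := monomial (expo n A) 1

theorem Xv_eq_sqfreeMonomial (h1 : 1 ≤ x) (hn : x ≤ n) : Xv k n x = sqfreeMonomial k n {x} := by
  rw [Xv, dif_pos ⟨h1, hn⟩, X]
  refine congrArg (monomial · 1) (Finsupp.ext fun i => ?_)
  rw [expo_apply, Finsupp.single_apply]
  refine if_congr ?_ rfl rfl
  rw [mem_singleton, Fin.ext_iff, Fin.val_mk]
  omega

theorem Xv_mul_sqfreeMonomial (h1 : 1 ≤ x) (hn : x ≤ n) (hx : x ∉ A) :
    Xv k n x * sqfreeMonomial k n A = sqfreeMonomial k n (insert x A) := by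
  rw [Xv_eq_sqfreeMonomial h1 hn, monomial_mul, ← expo_insert hx, one_mul]

theorem prod_Xv (hA : A ⊆ Icc 1 n) : ∏ x ∈ A, Xv k n x = sqfreeMonomial k n A := by
  induction A using Finset.induction_on with
  | empty =>
    rw [prod_empty, sqfreeMonomial, expo_empty, monomial_zero', C_1]
  | insert x A hx ih =>
    obtain ⟨hx1, hA⟩ := insert_subset_iff.1 hA
    rw [prod_insert hx, ih hA, Xv_mul_sqfreeMonomial (mem_Icc.1 hx1).1 (mem_Icc.1 hx1).2 hx]

theorem add_two_le_of_lt {t : ℕ → ℕ} (ht : ∀ j, j + 1 < a → t j + 2 ≤ t (j + 1)) {i j : ℕ}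
    (hij : i < j) (hj : j < a) : t i + 2 ≤ t j := by
  induction j, hij using Nat.le_induction with
  | base => exact ht i hj
  | succ j _ ih => exact (ih (by omega)).trans (by have := ht j hj; omega)

theorem image_range_mem_sparseSets {t : ℕ → ℕ} (ha : 0 < a) (hp : p ≤ t 0) (hq : t (a - 1) ≤ q)
    (ht : ∀ j, j + 1 < a → t j + 2 ≤ t (j + 1)) :
    Set.InjOn t (range a) ∧ (range a).image t ∈ sparseSets a p (q + 1) := by
  have hgap : ∀ i < a, ∀ j, t i ≤ t j + 1 → i ≤ j := fun i hi j h => by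
    by_contra! hji
    have := add_two_le_of_lt ht hji hi
    omega
  have hinj : Set.InjOn t (range a) := fun i hi j hj h =>
    le_antisymm (hgap i (mem_range.1 hi) j (by omega)) (hgap j (mem_range.1 hj) i (by omega))
  refine ⟨hinj, mem_sparseSets.2 ⟨fun x hx => ?_, ?_, fun x hx hx' => ?_⟩⟩
  · obtain ⟨j, hj, rfl⟩ := mem_image.1 hx
    have hj := mem_range.1 hj
    have h0 : t 0 ≤ t j := by
      rcases j.eq_zero_or_pos with rfl | h
      · exact le_rfl
      · have := add_two_le_of_lt ht h hj
        omega
    have h1 : t j ≤ t (a - 1) := by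
      rcases (show j ≤ a - 1 by omega).eq_or_lt with rfl | h
      · exact le_rfl
      · have := add_two_le_of_lt ht h (by omega)
        omega
    omega
  · rw [card_image_of_injOn hinj, card_range]
  · obtain ⟨i, hi, rfl⟩ := mem_image.1 hx
    obtain ⟨j, hj, hji⟩ := mem_image.1 hx'
    have := hgap j (mem_range.1 hj) i (by omega)
    rcases this.eq_or_lt with rfl | h
    · omega
    · have := add_two_le_of_lt ht h (mem_range.1 hi)
      omega

theorem exists_image_range_eq (ha : 0 < a) (hA : A ∈ sparseSets a p (q + 1)) :
    ∃ t : ℕ → ℕ, p ≤ t 0 ∧ t (a - 1) ≤ q ∧ (∀ j, j + 1 < a → t j + 2 ≤ t (j + 1)) ∧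
      (range a).image t = A ∧ Set.InjOn t (range a) := by
  obtain ⟨hpq, rfl, hsp⟩ := mem_sparseSets.1 hA
  have hfin : (Set.ofPred (· ∈ A)).Finite := A.finite_toSet
  have hcard : #hfin.toFinset = #A := congrArg card (by ext x; simp)
  have hmem : ∀ j < #A, Nat.nth (· ∈ A) j ∈ A := fun j hj =>
    Nat.nth_mem_of_lt_card hfin (hcard ▸ hj)
  have himage := Nat.image_nth_Iio_card hfin
  rw [hcard] at himage
  refine ⟨Nat.nth (· ∈ A), (hpq _ (hmem 0 ha)).1,
    Nat.lt_succ_iff.1 (hpq _ (hmem _ (Nat.sub_lt ha one_pos))).2, fun j hj => ?_, ?_, ?_⟩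
  · have hlt : Nat.nth (· ∈ A) j < Nat.nth (· ∈ A) (j + 1) :=
      Nat.nth_lt_nth' j.lt_succ_self fun _ => hcard.symm ▸ hj
    have hne : Nat.nth (· ∈ A) (j + 1) ≠ Nat.nth (· ∈ A) j + 1 := fun h =>
      hsp _ (hmem j (by omega)) (by rw [Nat.succ_eq_add_one, ← h]; exact hmem (j + 1) hj)
    omega
  · rw [← Finset.coe_inj, coe_image, coe_range, himage]
    rfl
  · have := Nat.nth_injOn hfin
    rwa [hcard, ← coe_range] at this

theorem idealI_eq_span (ha : 0 < a) (hp : 1 ≤ p) (hq : q ≤ n) : idealI k n a p q =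
    Ideal.span ((fun β => monomial β 1) '' (expo n '' (sparseSets a p (q + 1) : Set _))) := by
  have hsub : ∀ {A}, A ∈ sparseSets a p (q + 1) → A ⊆ Icc 1 n :=
    fun hA => subset_Icc_of_mem_sparseSets hA hp (by omega)
  rw [idealI, Set.image_image]
  congr 1
  ext f
  constructor
  · rintro ⟨t, hp, hq, ht, rfl⟩
    obtain ⟨hinj, hA⟩ := image_range_mem_sparseSets ha hp hq ht
    exact ⟨_, hA, (prod_Xv (hsub hA)).symm.trans (prod_image hinj)⟩
  · rintro ⟨A, hA, rfl⟩
    obtain ⟨t, hp, hq, ht, rfl, hinj⟩ := exists_image_range_eq ha hA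
    exact ⟨t, hp, hq, ht, (prod_Xv (hsub hA)).symm.trans (prod_image hinj)⟩

theorem sqfreeMonomial_mem_idealI (ha : 0 < a) (hp : 1 ≤ p) (hq : q ≤ n)
    (hA : A ∈ sparseSets a p (q + 1)) : sqfreeMonomial k n A ∈ idealI k n a p q := by
  rw [idealI_eq_span ha hp hq]
  exact Ideal.subset_span ⟨_, ⟨A, hA, rfl⟩, rfl⟩

theorem mem_idealI (ha : 0 < a) (hp : 1 ≤ p) (hq : q ≤ n) {f : MvPolynomial (Fin n) k} :
    f ∈ idealI k n a p q ↔
      ∀ β, coeff β f ≠ 0 → ∃ A ∈ sparseSets a p (q + 1), A ⊆ varSet β := by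
  rw [idealI_eq_span ha hp hq, mem_ideal_span_monomial_image]
  simp only [mem_support_iff, Set.exists_mem_image, mem_coe, expo_le_iff]
  refine forall₂_congr fun β _ => exists_congr fun A => and_congr_right fun hA => ?_
  rw [inter_eq_left.2 (subset_Icc_of_mem_sparseSets hA hp (by omega))]

end Monomials

section CyclicIdeal

open Finset MvPolynomial

variable {k : Type*} [Field k] {A X : Finset ℕ} {c m : ℕ}

theorem not_face_iff : ¬ Face m c X ↔
    ∃ A ∈ sparseSets (c + 1) 1 m ∪ sparseSets (c + 1) 2 (m + 1), A ⊆ X := by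
  constructor
  · intro h
    obtain ⟨B, hBX, hB, hcB⟩ : ∃ B ⊆ X ∩ Icc 1 m, Sparse (cycSucc m) B ∧ c < #B := by
      simpa [Face, SparseCardLE] using h
    obtain ⟨A, hAB, hcard⟩ := exists_subset_card_eq (Nat.succ_le_of_lt hcB)
    have hAm : ∀ x ∈ A, 1 ≤ x ∧ x ≤ m := fun x hx =>
      mem_Icc.1 (mem_of_mem_inter_right (hBX (hAB hx)))
    have hcyc := hB.subset hAB
    have hsp : Sparse Nat.succ A := fun x hx hx' => hcyc x hx <| by
      have := hAm _ hx'
      rwa [cycSucc_of_ne (by omega)]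
    refine ⟨A, mem_union.2 ?_, (hAB.trans hBX).trans inter_subset_left⟩
    by_cases hm : m ∈ A
    · refine Or.inr (mem_sparseSets.2 ⟨fun x hx => ?_, hcard, hsp⟩)
      have hx1 : x ≠ 1 := fun h => hcyc m hm (by rwa [cycSucc_self, ← h])
      have := hAm x hx
      omega
    · refine Or.inl (mem_sparseSets.2 ⟨fun x hx => ?_, hcard, hsp⟩)
      have hxm := ne_of_mem_of_not_mem hx hm
      have := hAm x hx
      omega
  · rintro ⟨A, hA, hAX⟩ h
    obtain ⟨hAm, hcard, hcyc⟩ : A ⊆ Icc 1 m ∧ #A = c + 1 ∧ Sparse (cycSucc m) A := by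
      rcases mem_union.1 hA with hA | hA <;> obtain ⟨hAm, hcard, hsp⟩ := mem_sparseSets.1 hA <;>
        refine ⟨fun x hx => mem_Icc.2 (by have := hAm x hx; omega), hcard, fun x hx hx' => ?_⟩
      · rw [cycSucc_of_ne (hAm x hx).2.ne] at hx'
        exact hsp x hx hx'
      · rcases eq_or_ne x m with rfl | hxm
        · rw [cycSucc_self] at hx'
          exact absurd (hAm 1 hx').1 (by omega)
        · rw [cycSucc_of_ne hxm] at hx'
          exact hsp x hx hx'
    have := h A (subset_inter hAX hAm) hcyc
    omega

/-- The ideal `I_{a,1,m-1} + I_{a,2,m}` of `k[x_1, …, x_m, z]`, where `z` is the variable with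
index `m + 1`. -/
noncomputable def cyclicIdeal (k : Type*) [Field k] (m a : ℕ) :
    Ideal (MvPolynomial (Fin (m + 1)) k) :=
  idealI k (m + 1) a 1 (m - 1) + idealI k (m + 1) a 2 m

theorem mem_cyclicIdeal (hm : 1 ≤ m) {f : MvPolynomial (Fin (m + 1)) k} :
    f ∈ cyclicIdeal k m (c + 1) ↔ ∀ β, Face m c (varSet β) → coeff β f = 0 := by
  rw [cyclicIdeal, idealI_eq_span c.succ_pos le_rfl (by omega),
    idealI_eq_span c.succ_pos one_le_two (by omega), Submodule.add_eq_sup, ← Ideal.span_union,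
    ← Set.image_union, ← Set.image_union, mem_ideal_span_monomial_image, Nat.sub_add_cancel hm,
    ← coe_union]
  refine forall_congr' fun β => ?_
  rw [mem_support_iff, ← not_imp_not, not_ne_iff, not_face_iff.not_right]
  refine imp_congr_left (not_congr ?_)
  simp only [Set.exists_mem_image, mem_coe, expo_le_iff]
  refine exists_congr fun A => and_congr_right fun hA => ?_
  rw [inter_eq_left.2 ((mem_union.1 hA).elim
    (fun hA => subset_Icc_of_mem_sparseSets hA le_rfl (by omega))
    (fun hA => subset_Icc_of_mem_sparseSets hA one_le_two (by omega)))]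

end CyclicIdeal

section Gluing

open Finset MvPolynomial

variable {σ R ι : Type*} [CommRing R] {Good : (σ →₀ ℕ) → Prop} {I : Ideal (MvPolynomial σ R)}
  {a b α α' : σ →₀ ℕ} {f g : MvPolynomial σ R}

theorem coeff_eq_coeff_of_mem (hI : ∀ f, f ∈ I ↔ ∀ β, Good β → coeff β f = 0)
    (h : monomial b 1 * f - monomial a 1 * g ∈ I) (hα : b + α = a + α') (hgood : Good (b + α)) :
    coeff α f = coeff α' g := by
  have := (hI _).1 h _ hgood
  rwa [coeff_sub, coeff_monomial_mul, hα, coeff_monomial_mul, one_mul, one_mul, sub_eq_zero] at this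

theorem coeff_eq_zero_of_mem (hI : ∀ f, f ∈ I ↔ ∀ β, Good β → coeff β f = 0)
    (h : monomial b 1 * f - monomial a 1 * g ∈ I) (hgood : Good (b + α)) (ha : ¬ a ≤ b + α) :
    coeff α f = 0 := by
  have := (hI _).1 h _ hgood
  rwa [coeff_sub, coeff_monomial_mul, coeff_monomial_mul', if_neg ha, one_mul, sub_zero] at this

/-- The coefficient of `x^δ` in `C` is the common value of the coefficients of `x^{u i + δ}` in
`f i` over those `i` for which `u i + δ` is good. -/
theorem exists_sub_mul_monomial_mem (hI : ∀ f, f ∈ I ↔ ∀ β, Good β → coeff β f = 0)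
    (G : Finset ι) (u : ι → σ →₀ ℕ) (f : ι → MvPolynomial σ R)
    (hle : ∀ i ∈ G, ∀ β, Good β → coeff β (f i) ≠ 0 → u i ≤ β)
    (hcoeff : ∀ δ, ∀ i ∈ G, ∀ j ∈ G, Good (u i + δ) → Good (u j + δ) →
      coeff (u i + δ) (f i) = coeff (u j + δ) (f j)) :
    ∃ C, ∀ i ∈ G, f i - C * monomial (u i) 1 ∈ I := by
  classical
  have hex : ∀ δ, ∃ v, ∀ i ∈ G, Good (u i + δ) → coeff (u i + δ) (f i) = v := fun δ => by
    by_cases h : ∃ i ∈ G, Good (u i + δ)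
    · obtain ⟨i, hi, hgood⟩ := h
      exact ⟨_, fun j hj hgood' => hcoeff δ j hj i hi hgood' hgood⟩
    · exact ⟨0, fun i hi hgood => absurd ⟨i, hi, hgood⟩ h⟩
  choose v hv using hex
  set D : Finset (σ →₀ ℕ) := G.biUnion fun i => (f i).support.image (· - u i)
  refine ⟨∑ δ ∈ D, monomial δ (v δ), fun i hi => (hI _).2 fun β hβ => ?_⟩
  rw [coeff_sub, sub_eq_zero, coeff_mul_monomial']
  split_ifs with hiβ
  · obtain ⟨δ, rfl⟩ := exists_add_of_le hiβ
    rw [add_tsub_cancel_left, mul_one, coeff_sum]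
    simp only [coeff_monomial, sum_ite_eq']
    split_ifs with hδ
    · exact hv δ i hi hβ
    · by_contra hne
      exact hδ (mem_biUnion.2
        ⟨i, hi, mem_image.2 ⟨_, mem_support_iff.2 hne, add_tsub_cancel_left _ _⟩⟩)
  · exact not_not.1 fun hne => hiβ (hle i hi β hβ hne)

end Gluing

section Compatible

open Finset MvPolynomial

variable {k : Type*} [Field k] {A B X s t : Finset ℕ} {b c m n : ℕ}

theorem face_varSet_expo_add {β : Fin (m + 1) →₀ ℕ} :
    Face m c (varSet (expo (m + 1) A + β)) ↔ Face m c (A ∪ varSet β) := by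
  refine face_congr fun x hx => ?_
  have hx' := Icc_subset_Icc_right m.le_succ hx
  simp only [varSet_expo_add, mem_union, mem_inter, hx', and_true]

theorem not_expo_le_add {β : Fin n →₀ ℕ} {x : ℕ} (hx : x ∈ Icc 1 n) (hA : x ∈ A) (hB : x ∉ B)
    (hβ : x ∉ varSet β) : ¬ expo n A ≤ expo n B + β := by
  rw [expo_le_iff, varSet_expo_add, not_subset]
  exact ⟨x, mem_inter.2 ⟨hA, hx⟩, by simp [hB, hβ]⟩

/-- The index sets of the squarefree monomials generating
`J = I_{b+1,2,m-1} + z I_{b,3,m-2}`. -/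
def homGens (m b : ℕ) : Finset (Finset ℕ) :=
  sparseSets (b + 1) 2 m ∪ (sparseSets b 3 (m - 1)).image (insert (m + 1))

theorem mem_homGens_left (hs : s ∈ sparseSets (b + 1) 2 m) : s ∈ homGens m b :=
  mem_union_left _ hs

theorem mem_homGens_right (ht : t ∈ sparseSets b 3 (m - 1)) : insert (m + 1) t ∈ homGens m b :=
  mem_union_right _ (mem_image_of_mem _ ht)

/-- The relations `x^B f_A ≡ x^A f_B` modulo `I` satisfied by the values `f_A` of a homomorphism
`J̄ → R/I` at the generators `x^A` of `J`. -/
def IsCompatible (k : Type*) [Field k] (m b : ℕ)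
    (f : Finset ℕ → MvPolynomial (Fin (m + 1)) k) : Prop :=
  ∀ A ∈ homGens m b, ∀ B ∈ homGens m b,
    sqfreeMonomial k (m + 1) B * f A - sqfreeMonomial k (m + 1) A * f B ∈ cyclicIdeal k m (b + 2)

variable {f : Finset ℕ → MvPolynomial (Fin (m + 1)) k}

theorem IsCompatible.sub_mul (hf : IsCompatible k m b f) (C : MvPolynomial (Fin (m + 1)) k) :
    IsCompatible k m b fun A => f A - C * sqfreeMonomial k (m + 1) A := fun A hA B hB => by
  convert hf A hA B hB using 1
  ring

theorem IsCompatible.coeff_eq (hf : IsCompatible k m b f) (hm : 1 ≤ m) (hA : A ∈ homGens m b)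
    (hB : B ∈ homGens m b) {α α' : Fin (m + 1) →₀ ℕ}
    (hα : expo (m + 1) B + α = expo (m + 1) A + α') (hface : Face m (b + 1) (B ∪ varSet α)) :
    coeff α (f A) = coeff α' (f B) :=
  coeff_eq_coeff_of_mem (fun _ => mem_cyclicIdeal hm) (hf A hA B hB) hα
    (face_varSet_expo_add.2 hface)

theorem IsCompatible.coeff_eq_zero (hf : IsCompatible k m b f) (hA : A ∈ homGens m b)
    (hB : B ∈ homGens m b) {β : Fin (m + 1) →₀ ℕ} (hn : n ∈ Icc 1 m) (hnA : n ∈ A) (hnB : n ∉ B)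
    (hnβ : n ∉ varSet β) (hface : Face m (b + 1) (B ∪ varSet β)) : coeff β (f A) = 0 :=
  coeff_eq_zero_of_mem (fun _ => mem_cyclicIdeal (by have := mem_Icc.1 hn; omega))
    (hf A hA B hB) (face_varSet_expo_add.2 hface)
    (not_expo_le_add (Icc_subset_Icc_right m.le_succ hn) hnA hnB hnβ)

theorem Face.exists_homGens (hX : Face m (b + 1) X) (hbm : 2 * b + 4 ≤ m) (hn : n ∈ Icc 1 m)
    (hnX : n ∉ X) : ∃ B ∈ homGens m b, n ∉ B ∧ Face m (b + 1) (B ∪ X) := by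
  rcases hX.exists_face_union hbm hn hnX with ⟨s, hs, hns, h⟩ | ⟨-, -, t, ht, hnt, h⟩
  · exact ⟨s, mem_homGens_left hs, hns, union_comm X s ▸ h⟩
  · have hnm := (mem_Icc.1 hn).2
    exact ⟨_, mem_homGens_right ht, by simp [hnt]; omega, face_insert_succ_union.2 h⟩

theorem IsCompatible.expo_le (hf : IsCompatible k m b f) (hbm : 2 * b + 4 ≤ m)
    (hs : s ∈ sparseSets (b + 1) 2 m) {β : Fin (m + 1) →₀ ℕ} (hβ : Face m (b + 1) (varSet β))
    (hne : coeff β (f s) ≠ 0) : expo (m + 1) s ≤ β := by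
  rw [expo_le_iff]
  intro n hn
  have hns := mem_of_mem_inter_left hn
  have hnm : n ∈ Icc 1 m := subset_Icc_of_mem_sparseSets hs one_le_two (by omega) hns
  by_contra hnβ
  obtain ⟨B, hB, hnB, hface⟩ := hβ.exists_homGens hbm hnm hnβ
  exact hne (hf.coeff_eq_zero (mem_homGens_left hs) hB hnm hns hnB hnβ hface)

theorem IsCompatible.coeff_expo_add_eq (hf : IsCompatible k m b f) (hbm : 2 * b + 4 ≤ m)
    (hs : s ∈ sparseSets (b + 1) 2 m) (ht : t ∈ sparseSets (b + 1) 2 m) (δ : Fin (m + 1) →₀ ℕ)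
    (hsface : Face m (b + 1) (varSet (expo (m + 1) s + δ)))
    (htface : Face m (b + 1) (varSet (expo (m + 1) t + δ))) :
    coeff (expo (m + 1) s + δ) (f s) = coeff (expo (m + 1) t + δ) (f t) := by
  rw [face_varSet_expo_add, union_comm] at hsface htface
  obtain ⟨E, hE, hsE⟩ := hsface.exists_pairCovers_of_union hbm hs
  obtain ⟨E', hE', htE'⟩ := htface.exists_pairCovers_of_union hbm ht
  refine eq_of_forall_pairCovers (v := fun s => coeff (expo (m + 1) s + δ) (f s))
    (fun E hE s hs t ht hsE htE => ?_) hE hE' hs ht hsE htE'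
  refine hf.coeff_eq (by omega) (mem_homGens_left hs) (mem_homGens_left ht)
    (add_left_comm _ _ _) ?_
  have hst : s ∪ t ⊆ Icc 1 m := union_subset
    (subset_Icc_of_mem_sparseSets hs one_le_two (by omega))
    (subset_Icc_of_mem_sparseSets ht one_le_two (by omega))
  refine (face_congr fun x hx => ?_).1
    (face_of_mem_pairCovers ((mem_pairCovers_union hst).2 ⟨hE, union_subset hsE htE⟩))
  have := Icc_subset_Icc_right m.le_succ hx
  simp only [varSet_expo_add, mem_union, mem_inter, this, and_true]
  tauto

theorem IsCompatible.exists_sub_mem (hf : IsCompatible k m b f) (hbm : 2 * b + 4 ≤ m) :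
    ∃ C, ∀ s ∈ sparseSets (b + 1) 2 m,
      f s - C * sqfreeMonomial k (m + 1) s ∈ cyclicIdeal k m (b + 2) :=
  exists_sub_mul_monomial_mem (fun _ => mem_cyclicIdeal (by omega)) _ (expo (m + 1)) f
    (fun _ hs _ => hf.expo_le hbm hs) fun δ _ hs _ ht => hf.coeff_expo_add_eq hbm hs ht δ

theorem IsCompatible.expo_insert_le (hf : IsCompatible k m b f) (hbm : 2 * b + 4 ≤ m)
    (hf0 : ∀ s ∈ sparseSets (b + 1) 2 m, f s ∈ cyclicIdeal k m (b + 2))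
    (ht : t ∈ sparseSets b 3 (m - 1)) {β : Fin (m + 1) →₀ ℕ} (hβ : Face m (b + 1) (varSet β))
    (hne : coeff β (f (insert (m + 1) t)) ≠ 0) :
    expo (m + 1) (insert 1 (insert m t)) ≤ β := by
  rw [expo_le_iff]
  intro n hn
  have htm : t ⊆ Icc 1 m := subset_Icc_of_mem_sparseSets ht (by omega) (by omega)
  have hnA := mem_of_mem_inter_left hn
  have hnm : n ∈ Icc 1 m := insert_subset_iff.2
    ⟨mem_Icc.2 (by omega), insert_subset_iff.2 ⟨mem_Icc.2 (by omega), htm⟩⟩ hnA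
  by_contra hnβ
  refine hne ?_
  rcases hβ.exists_face_union hbm hnm hnβ with ⟨s, hs, -, hface⟩ | ⟨h1n, hn', t', ht', hnt', hface⟩
  · have hst := hf _ (mem_homGens_right ht) s (mem_homGens_left hs)
    rw [Submodule.sub_mem_iff_left _ (Ideal.mul_mem_left _ _ (hf0 s hs)),
      mem_cyclicIdeal (by omega)] at hst
    have := hst (expo (m + 1) s + β) (face_varSet_expo_add.2 (union_comm s _ ▸ hface))
    rwa [coeff_monomial_mul, one_mul] at this
  · have hnt : n ∈ t := by
      simp only [mem_insert] at hnA
      rcases hnA with h | h | h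
      · omega
      · omega
      · exact h
    refine hf.coeff_eq_zero (mem_homGens_right ht) (mem_homGens_right ht') hnm
      (mem_insert_of_mem hnt) (by simp [hnt']; omega) hnβ (face_insert_succ_union.2 hface)

theorem expo_insert_add_expo_insert (hm : 2 ≤ m) (hs : s ∈ sparseSets b 3 (m - 1))
    (ht : t ∈ sparseSets b 3 (m - 1)) (δ : Fin (m + 1) →₀ ℕ) :
    expo (m + 1) (insert (m + 1) t) + (expo (m + 1) (insert 1 (insert m s)) + δ) =
      expo (m + 1) (insert (m + 1) s) + (expo (m + 1) (insert 1 (insert m t)) + δ) := by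
  have hsplit : ∀ {u}, u ∈ sparseSets b 3 (m - 1) →
      expo (m + 1) (insert (m + 1) u) = expo (m + 1) {m + 1} + expo (m + 1) u ∧
      expo (m + 1) (insert 1 (insert m u)) =
        expo (m + 1) {1} + (expo (m + 1) {m} + expo (m + 1) u) := fun {u} hu => by
    have hu := (mem_sparseSets.1 hu).1
    have hm : m ∉ u := fun h => by have := hu m h; omega
    have h1 : 1 ∉ insert m u := fun h => (mem_insert.1 h).elim (by omega)
      fun h => by have := hu 1 h; omega
    exact ⟨expo_insert fun h => by have := hu _ h; omega, by rw [expo_insert h1, expo_insert hm]⟩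
  rw [(hsplit hs).1, (hsplit hs).2, (hsplit ht).1, (hsplit ht).2]
  abel

theorem IsCompatible.coeff_expo_insert_add_eq (hf : IsCompatible k m b f) (hbm : 2 * b + 4 ≤ m)
    (hs : s ∈ sparseSets b 3 (m - 1)) (ht : t ∈ sparseSets b 3 (m - 1)) (δ : Fin (m + 1) →₀ ℕ)
    (hsface : Face m (b + 1) (varSet (expo (m + 1) (insert 1 (insert m s)) + δ)))
    (htface : Face m (b + 1) (varSet (expo (m + 1) (insert 1 (insert m t)) + δ))) :
    coeff (expo (m + 1) (insert 1 (insert m s)) + δ) (f (insert (m + 1) s)) =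
      coeff (expo (m + 1) (insert 1 (insert m t)) + δ) (f (insert (m + 1) t)) := by
  rw [face_varSet_expo_add, union_comm] at hsface htface
  obtain ⟨E, hE, hsE⟩ := hsface.exists_pairCovers_of_union_insert hbm hs
  obtain ⟨E', hE', htE'⟩ := htface.exists_pairCovers_of_union_insert hbm ht
  refine eq_of_forall_pairCovers
    (v := fun s => coeff (expo (m + 1) (insert 1 (insert m s)) + δ) (f (insert (m + 1) s)))
    (fun E hE s hs t ht hsE htE => ?_) hE hE' hs ht hsE htE'
  refine hf.coeff_eq (by omega) (mem_homGens_right hs) (mem_homGens_right ht)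
    (expo_insert_add_expo_insert (by omega) hs ht δ)
    (face_succ_of_mem_pairCovers
      (mem_pairCovers.2 ⟨(mem_pairCovers.1 hE).1, fun x hx h2 hxm => ?_⟩))
  simp only [varSet_expo_add, mem_union, mem_inter, mem_insert] at hx
  rcases hx with (h | h) | ⟨h | h | h, -⟩ | h
  · omega
  · exact htE h
  · omega
  · omega
  · exact hsE h
  · exact (mem_pairCovers.1 hE).2 x h h2 hxm

theorem IsCompatible.exists_sub_sub_mem (hf : IsCompatible k m b f) (hbm : 2 * b + 4 ≤ m) :
    ∃ C C', (∀ s ∈ sparseSets (b + 1) 2 m,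
        f s - C * sqfreeMonomial k (m + 1) s ∈ cyclicIdeal k m (b + 2)) ∧
      ∀ t ∈ sparseSets b 3 (m - 1),
        f (insert (m + 1) t) - C * sqfreeMonomial k (m + 1) (insert (m + 1) t) -
          C' * sqfreeMonomial k (m + 1) (insert 1 (insert m t)) ∈ cyclicIdeal k m (b + 2) := by
  obtain ⟨C, hC⟩ := hf.exists_sub_mem hbm
  obtain ⟨C', hC'⟩ := exists_sub_mul_monomial_mem (fun _ => mem_cyclicIdeal (by omega)) _
    (fun t => expo (m + 1) (insert 1 (insert m t))) _
    (fun _ ht _ => (hf.sub_mul C).expo_insert_le hbm hC ht)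
    fun δ _ hs _ ht => (hf.sub_mul C).coeff_expo_insert_add_eq hbm hs ht δ
  exact ⟨C, C', hC, hC'⟩

end Compatible

section Quotient

variable {R : Type*} [CommRing R] {I P Q : Ideal R} {y z : R}

theorem linearMap_ext_of_eq_span {M : Type*} [AddCommGroup M] [Module R M] {S : Set R}
    (hP : P = Ideal.span S) {φ ψ : P →ₗ[R] M} (h : ∀ u : P, (u : R) ∈ S → φ u = ψ u) : φ = ψ := by
  subst hP
  exact LinearMap.ext_on Submodule.span_span_coe_preimage fun u hu => h u hu

theorem coe_mul_map_comm (ψ : P →ₗ[R] R) (u v : P) : u * ψ v = v * ψ u := by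
  rw [← smul_eq_mul, ← map_smul, ← smul_eq_mul, ← map_smul]
  exact congrArg ψ (Subtype.ext (mul_comm _ _))

theorem mem_map_mk_add_iff {u : R ⧸ I} :
    u ∈ (P + Ideal.span {z} * Q).map (Ideal.Quotient.mk I) ↔
      ∃ v ∈ P, ∃ w ∈ Q, Ideal.Quotient.mk I (v + z * w) = u := by
  simp only [Ideal.mem_map_iff_of_surjective _ Ideal.Quotient.mk_surjective, Submodule.add_eq_sup,
    Submodule.mem_sup, Ideal.mem_span_singleton_mul]
  constructor
  · rintro ⟨_, ⟨v, hv, _, ⟨w, hw, rfl⟩, rfl⟩, rfl⟩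
    exact ⟨v, hv, w, hw, rfl⟩
  · rintro ⟨v, hv, w, hw, rfl⟩
    exact ⟨_, ⟨v, hv, _, ⟨w, hw, rfl⟩, rfl⟩, rfl⟩

theorem exists_linearMap_mk_add_mul (h : ∀ v ∈ P, ∀ w ∈ Q, v + z * w ∈ I → y * w ∈ I) :
    ∃ φ : (P + Ideal.span {z} * Q).map (Ideal.Quotient.mk I) →ₗ[R ⧸ I] R ⧸ I,
      ∀ u : (P + Ideal.span {z} * Q).map (Ideal.Quotient.mk I), ∀ v ∈ P, ∀ w ∈ Q,
        (u : R ⧸ I) = Ideal.Quotient.mk I (v + z * w) →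
        φ u = Ideal.Quotient.mk I (y * w) := by
  let g : P × Q →ₗ[R] (P + Ideal.span {z} * Q).map (Ideal.Quotient.mk I) :=
    (I.mkQ ∘ₗ P.subtype.coprod (z • Q.subtype)).codRestrict
      (((P + Ideal.span {z} * Q).map (Ideal.Quotient.mk I)).restrictScalars R)
      fun x => mem_map_mk_add_iff.2 ⟨x.1, x.1.2, x.2, x.2.2, rfl⟩
  let g' : P × Q →ₗ[R] R ⧸ I := I.mkQ ∘ₗ (y • Q.subtype) ∘ₗ LinearMap.snd R P Q
  have hg : Function.Surjective g := fun ⟨u, hu⟩ => by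
    obtain ⟨v, hv, w, hw, rfl⟩ := mem_map_mk_add_iff.1 hu
    exact ⟨(⟨v, hv⟩, ⟨w, hw⟩), rfl⟩
  have hker : LinearMap.ker g ≤ LinearMap.ker g' := fun x hx =>
    Ideal.Quotient.eq_zero_iff_mem.2 (h x.1 x.1.2 x.2 x.2.2
      (Ideal.Quotient.eq_zero_iff_mem.1 (congrArg Subtype.val hx)))
  let φ := (LinearMap.ker g).liftQ g' hker ∘ₗ (g.quotKerEquivOfSurjective hg).symm.toLinearMap
  have hφ : ∀ x, φ (g x) = g' x := fun x =>
    congrArg ((LinearMap.ker g).liftQ g' hker) (g.quotKerEquivOfSurjective_symm_apply hg x)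
  refine ⟨φ.extendScalarsOfSurjective Ideal.Quotient.mk_surjective, fun u v hv w hw hu => ?_⟩
  rw [show u = g (⟨v, hv⟩, ⟨w, hw⟩) from Subtype.ext hu]
  exact hφ _

theorem existsUnique_linearMap_mk (h : ∀ v ∈ P, ∀ w ∈ Q, v + z * w ∈ I → y * w ∈ I) :
    ∃! φ : (P + Ideal.span {z} * Q).map (Ideal.Quotient.mk I) →ₗ[R ⧸ I] R ⧸ I,
      (∀ u : (P + Ideal.span {z} * Q).map (Ideal.Quotient.mk I), ∀ v ∈ P,
        (u : R ⧸ I) = Ideal.Quotient.mk I v → φ u = 0) ∧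
      ∀ u : (P + Ideal.span {z} * Q).map (Ideal.Quotient.mk I), ∀ w ∈ Q,
        (u : R ⧸ I) = Ideal.Quotient.mk I (z * w) → φ u = Ideal.Quotient.mk I (y * w) := by
  obtain ⟨φ, hφ⟩ := exists_linearMap_mk_add_mul h
  have hφP : ∀ u : (P + Ideal.span {z} * Q).map (Ideal.Quotient.mk I), ∀ v ∈ P,
      (u : R ⧸ I) = Ideal.Quotient.mk I v → φ u = 0 := fun u v hv hu => by
    rw [hφ u v hv 0 Q.zero_mem (by rw [hu, mul_zero, add_zero]), mul_zero, map_zero]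
  have hφQ : ∀ u : (P + Ideal.span {z} * Q).map (Ideal.Quotient.mk I), ∀ w ∈ Q,
      (u : R ⧸ I) = Ideal.Quotient.mk I (z * w) → φ u = Ideal.Quotient.mk I (y * w) :=
    fun u w hw hu => hφ u 0 P.zero_mem w hw (by rw [hu, zero_add])
  refine ⟨φ, ⟨hφP, hφQ⟩, fun ψ ⟨hψP, hψQ⟩ => LinearMap.ext fun ⟨u, hu⟩ => ?_⟩
  obtain ⟨v, hv, w, hw, rfl⟩ := mem_map_mk_add_iff.1 hu
  have hvK := mem_map_mk_add_iff (I := I) (Q := Q) (z := z).2 ⟨v, hv, 0, Q.zero_mem, rfl⟩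
  have hwK := mem_map_mk_add_iff (I := I) (P := P) (z := z).2 ⟨0, P.zero_mem, w, hw, rfl⟩
  rw [mul_zero, add_zero] at hvK
  rw [zero_add] at hwK
  rw [show (⟨_, hu⟩ : Ideal.map _ _) = ⟨_, hvK⟩ + ⟨_, hwK⟩ from Subtype.ext (map_add _ _ _),
    map_add, map_add, hφP ⟨_, hvK⟩ v hv rfl, hψP ⟨_, hvK⟩ v hv rfl, hφQ ⟨_, hwK⟩ w hw rfl,
    hψQ ⟨_, hwK⟩ w hw rfl]

end Quotient

section Hom

open Finset MvPolynomial

variable {k : Type*} [Field k] {s t : Finset ℕ} {b m : ℕ}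

theorem Xv_mul_Xv_mul_sqfreeMonomial (hm : 2 ≤ m) (ht : t ∈ sparseSets b 3 (m - 1)) :
    Xv k (m + 1) 1 * Xv k (m + 1) m * sqfreeMonomial k (m + 1) t =
      sqfreeMonomial k (m + 1) (insert 1 (insert m t)) := by
  have ht := (mem_sparseSets.1 ht).1
  have hmt : m ∉ t := fun h => by have := ht m h; omega
  have h1t : 1 ∉ insert m t := fun h => (mem_insert.1 h).elim (by omega)
    fun h => by have := ht 1 h; omega
  rw [mul_assoc, Xv_mul_sqfreeMonomial (by omega) (by omega) hmt,
    Xv_mul_sqfreeMonomial le_rfl (by omega) h1t]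

theorem Xv_succ_mul_sqfreeMonomial (ht : t ∈ sparseSets b 3 (m - 1)) :
    Xv k (m + 1) (m + 1) * sqfreeMonomial k (m + 1) t =
      sqfreeMonomial k (m + 1) (insert (m + 1) t) :=
  Xv_mul_sqfreeMonomial (by omega) le_rfl fun h => by have := (mem_sparseSets.1 ht).1 _ h; omega

theorem mul_mem_cyclicIdeal_of_add_mem (hb : 0 < b) (hbm : 2 * b + 4 ≤ m)
    {v w : MvPolynomial (Fin (m + 1)) k} (hv : v ∈ idealI k (m + 1) (b + 1) 2 (m - 1))
    (hw : w ∈ idealI k (m + 1) b 3 (m - 2))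
    (h : v + Xv k (m + 1) (m + 1) * w ∈ cyclicIdeal k m (b + 2)) :
    Xv k (m + 1) 1 * Xv k (m + 1) m * w ∈ cyclicIdeal k m (b + 2) := by
  rw [Xv_eq_sqfreeMonomial (by omega) le_rfl] at h
  rw [Xv_eq_sqfreeMonomial (x := m) (by omega) (by omega),
    Xv_mul_sqfreeMonomial le_rfl (by omega) (by simp; omega)]
  rw [mem_cyclicIdeal (by omega)] at h ⊢
  intro β hβ
  by_contra hne
  rw [coeff_monomial_mul', ← ne_eq, ite_ne_right_iff, one_mul] at hne
  obtain ⟨hle, hne⟩ := hne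
  obtain ⟨γ, rfl⟩ := exists_add_of_le hle
  rw [add_tsub_cancel_left] at hne
  rw [face_varSet_expo_add] at hβ
  have hγface : Face m (b + 1) ({m + 1} ∪ varSet γ) := by
    rw [← insert_empty_eq, face_insert_succ_union, union_empty]
    exact hβ.mono subset_union_right
  have hγ := h (expo (m + 1) {m + 1} + γ) (face_varSet_expo_add.2 hγface)
  rw [coeff_add, coeff_monomial_mul, one_mul] at hγ
  have hvne : coeff (expo (m + 1) {m + 1} + γ) v ≠ 0 := fun h0 => hne (by rwa [h0, zero_add] at hγ)
  obtain ⟨t, ht, htγ⟩ := (mem_idealI hb (by omega) (by omega)).1 hw γ hne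
  obtain ⟨s, hs, hsγ⟩ := (mem_idealI b.succ_pos one_le_two (by omega)).1 hv _ hvne
  rw [show m - 2 + 1 = m - 1 by omega] at ht
  rw [Nat.sub_add_cancel (by omega)] at hs
  have hsγ : s ⊆ varSet γ := fun x hx => by
    have hxm := (mem_sparseSets.1 hs).1 x hx
    have := hsγ hx
    rw [varSet_expo_add, mem_union, mem_inter, mem_singleton] at this
    exact this.resolve_left (by omega)
  refine not_face_union hbm hs ht (hβ.mono ?_)
  rw [← singleton_union, ← singleton_union, ← union_assoc {1}, union_left_comm]
  exact union_subset_union_right (union_subset hsγ htγ)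

theorem idealI_add_span_mul_idealI (hb : 0 < b) (hbm : 2 ≤ m) :
    idealI k (m + 1) (b + 1) 2 (m - 1) +
        Ideal.span {Xv k (m + 1) (m + 1)} * idealI k (m + 1) b 3 (m - 2) =
      Ideal.span (sqfreeMonomial k (m + 1) '' homGens m b) := by
  rw [idealI_eq_span b.succ_pos one_le_two (by omega), idealI_eq_span hb (by omega) (by omega),
    Ideal.span_mul_span', Set.singleton_mul, Submodule.add_eq_sup, ← Ideal.span_union, homGens,
    coe_union, coe_image, Set.image_union, Nat.sub_add_cancel (by omega),
    show m - 2 + 1 = m - 1 by omega]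
  simp only [Set.image_image]
  rw [Set.image_congr fun t ht => Xv_succ_mul_sqfreeMonomial ht]

theorem exists_isCompatible {K : Ideal (_ ⧸ cyclicIdeal k m (b + 2))}
    (hK : ∀ A ∈ homGens m b, Ideal.Quotient.mk _ (sqfreeMonomial k (m + 1) A) ∈ K)
    (ψ : K →ₗ[_ ⧸ cyclicIdeal k m (b + 2)] _ ⧸ cyclicIdeal k m (b + 2)) :
    ∃ f, IsCompatible k m b f ∧
      ∀ A (hA : Ideal.Quotient.mk _ (sqfreeMonomial k (m + 1) A) ∈ K),
        ψ ⟨_, hA⟩ = Ideal.Quotient.mk _ (f A) := by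
  have hlift : ∀ A, ∃ g, ∀ hA : Ideal.Quotient.mk _ (sqfreeMonomial k (m + 1) A) ∈ K,
      ψ ⟨_, hA⟩ = Ideal.Quotient.mk _ g := fun A => by
    by_cases hA : Ideal.Quotient.mk _ (sqfreeMonomial k (m + 1) A) ∈ K
    · obtain ⟨g, hg⟩ := Ideal.Quotient.mk_surjective (ψ ⟨_, hA⟩)
      exact ⟨g, fun _ => hg.symm⟩
    · exact ⟨0, fun h => absurd h hA⟩
  choose f hf using hlift
  refine ⟨f, fun A hA B hB => ?_, hf⟩
  rw [← Ideal.Quotient.eq, map_mul, map_mul, ← hf A (hK A hA), ← hf B (hK B hB)]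
  exact coe_mul_map_comm ψ ⟨_, hK B hB⟩ ⟨_, hK A hA⟩

theorem span_subtype_pair_eq_top (hbm : 2 * b + 4 ≤ m)
    {K : Ideal (_ ⧸ cyclicIdeal k m (b + 2))}
    (hK : K = Ideal.span (Ideal.Quotient.mk _ '' (sqfreeMonomial k (m + 1) '' homGens m b)))
    {φ : K →ₗ[_ ⧸ cyclicIdeal k m (b + 2)] _ ⧸ cyclicIdeal k m (b + 2)}
    (hs : ∀ s ∈ sparseSets (b + 1) 2 m,
      ∀ h : Ideal.Quotient.mk _ (sqfreeMonomial k (m + 1) s) ∈ K, φ ⟨_, h⟩ = 0)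
    (ht : ∀ t ∈ sparseSets b 3 (m - 1),
      ∀ h : Ideal.Quotient.mk _ (sqfreeMonomial k (m + 1) (insert (m + 1) t)) ∈ K,
        φ ⟨_, h⟩ = Ideal.Quotient.mk _ (sqfreeMonomial k (m + 1) (insert 1 (insert m t)))) :
    Submodule.span (_ ⧸ cyclicIdeal k m (b + 2)) {K.subtype, φ} = ⊤ := by
  refine Submodule.eq_top_iff'.2 fun ψ => Submodule.mem_span_pair.2 ?_
  have hmem : ∀ A ∈ homGens m b, Ideal.Quotient.mk _ (sqfreeMonomial k (m + 1) A) ∈ K :=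
    fun A hA => hK ▸ Ideal.subset_span ⟨_, ⟨A, hA, rfl⟩, rfl⟩
  obtain ⟨f, hf, hψ⟩ := exists_isCompatible hmem ψ
  obtain ⟨C, C', hC, hC'⟩ := hf.exists_sub_sub_mem hbm
  refine ⟨Ideal.Quotient.mk _ C, Ideal.Quotient.mk _ C', linearMap_ext_of_eq_span hK ?_⟩
  rintro ⟨_, hA'⟩ ⟨_, ⟨A, hA, rfl⟩, rfl⟩
  rw [LinearMap.add_apply, LinearMap.smul_apply, LinearMap.smul_apply, smul_eq_mul, smul_eq_mul,
    Submodule.subtype_apply, hψ A hA']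
  rcases mem_union.1 hA with hA | hA
  · rw [hs A hA, mul_zero, add_zero, ← map_mul, eq_comm, Ideal.Quotient.eq]
    exact hC A hA
  · obtain ⟨t, htm, rfl⟩ := mem_image.1 hA
    rw [ht t htm, ← map_mul, ← map_mul, ← map_add, eq_comm, Ideal.Quotient.eq, ← sub_sub]
    exact hC' t htm

end Hom

/-- Lemma identifying the Hom module (d even case). Let `d ≥ 4` be even, `d + 1 < m`,
`a = (d+2)/2`. In `R = k[x_1,…,x_m,z]` (with `z` the last variable) set
`I = I_{a,1,m−1} + I_{a,2,m}` and `J = I_{a−1,2,m−1} + z·I_{a−2,3,m−2}`, and let `J̄` be the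
image of `J` in `R/I`. Then there is a unique `R/I`-linear map `φ : J̄ → R/I` with
`φ(v) = 0` for `v ∈ I_{a−1,2,m−1}` and `φ(zw) = x_1 x_m w` for `w ∈ I_{a−2,3,m−2}`; moreover
`Hom_{R/I}(J̄, R/I)` is generated as an `R/I`-module by the inclusion `ι` and `φ`. -/
theorem hom_module_identification_even (k : Type*) [Field k] (d m : ℕ)
    (hd : Even d) (hd4 : 4 ≤ d) (hm : d + 1 < m) (a : ℕ) (ha : a = (d + 2) / 2)
    (I J : Ideal (MvPolynomial (Fin (m + 1)) k))
    (hI : I = idealI k (m + 1) a 1 (m - 1) + idealI k (m + 1) a 2 m)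
    (hJ : J = idealI k (m + 1) (a - 1) 2 (m - 1) +
      Ideal.span {Xv k (m + 1) (m + 1)} * idealI k (m + 1) (a - 2) 3 (m - 2))
    (Jbar : Ideal (MvPolynomial (Fin (m + 1)) k ⧸ I))
    (hJbar : Jbar = J.map (Ideal.Quotient.mk I)) :
    ∃ φ : Jbar →ₗ[MvPolynomial (Fin (m + 1)) k ⧸ I] MvPolynomial (Fin (m + 1)) k ⧸ I,
      ((∀ u : Jbar, ∀ v ∈ idealI k (m + 1) (a - 1) 2 (m - 1),
          (u : MvPolynomial (Fin (m + 1)) k ⧸ I) = Ideal.Quotient.mk I v → φ u = 0) ∧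
        (∀ u : Jbar, ∀ w ∈ idealI k (m + 1) (a - 2) 3 (m - 2),
          (u : MvPolynomial (Fin (m + 1)) k ⧸ I) =
            Ideal.Quotient.mk I (Xv k (m + 1) (m + 1) * w) →
          φ u = Ideal.Quotient.mk I (Xv k (m + 1) 1 * Xv k (m + 1) m * w))) ∧
      (∀ ψ : Jbar →ₗ[MvPolynomial (Fin (m + 1)) k ⧸ I] MvPolynomial (Fin (m + 1)) k ⧸ I,
        ((∀ u : Jbar, ∀ v ∈ idealI k (m + 1) (a - 1) 2 (m - 1),
          (u : MvPolynomial (Fin (m + 1)) k ⧸ I) = Ideal.Quotient.mk I v → ψ u = 0) ∧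
        (∀ u : Jbar, ∀ w ∈ idealI k (m + 1) (a - 2) 3 (m - 2),
          (u : MvPolynomial (Fin (m + 1)) k ⧸ I) =
            Ideal.Quotient.mk I (Xv k (m + 1) (m + 1) * w) →
          ψ u = Ideal.Quotient.mk I (Xv k (m + 1) 1 * Xv k (m + 1) m * w))) → ψ = φ) ∧
      Submodule.span (MvPolynomial (Fin (m + 1)) k ⧸ I)
        {Submodule.subtype Jbar, φ} = ⊤ := by
  obtain ⟨e, rfl⟩ := hd
  obtain ⟨b, rfl⟩ : ∃ b, a = b + 2 := ⟨a - 2, by omega⟩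
  obtain rfl : I = cyclicIdeal k m (b + 2) := hI
  have hb : 0 < b := by omega
  have hbm : 2 * b + 4 ≤ m := by omega
  have hspan : Jbar = Ideal.span (Ideal.Quotient.mk _ ''
      (sqfreeMonomial k (m + 1) '' homGens m b)) := by
    rw [hJbar, hJ, ← Ideal.map_span]
    exact congrArg _ (idealI_add_span_mul_idealI hb (by omega))
  subst hJbar hJ
  obtain ⟨φ, hφ, hunique⟩ := existsUnique_linearMap_mk fun _ hv _ hw =>
    mul_mem_cyclicIdeal_of_add_mem (k := k) hb hbm hv hw
  refine ⟨φ, hφ, hunique, span_subtype_pair_eq_top hbm hspan (fun s hs h => ?_)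
    fun t ht h => ?_⟩
  · rw [← Nat.sub_add_cancel (show 1 ≤ m by omega)] at hs
    exact hφ.1 _ _ (sqfreeMonomial_mem_idealI b.succ_pos one_le_two (by omega) hs) rfl
  · rw [← Xv_mul_Xv_mul_sqfreeMonomial (by omega) ht]
    have hz := (Xv_succ_mul_sqfreeMonomial (k := k) ht).symm
    rw [show m - 1 = m - 2 + 1 by omega] at ht
    exact hφ.2 _ _ (sqfreeMonomial_mem_idealI hb (by omega) (by omega) ht) (congrArg _ hz)
end

section
/- Let k be a field, d an even integer with d ≥ 4, and m an integer with d+1 < m; set a = (d+2)/2. In k[x_1,…,x_m,z,T] let Q = I_{a,1,m−1} + I_{a,2,m} + T·I_{a−1,2,m−1} + (zT − x_1x_m)·I_{a−2,3,m−2}, and set S = k[x_1,…,x_m,z,T]/Q. Then the image of z in S is a non-zero-divisor of S, and S/(z) is isomorphic as a k-algebra to k[x_1,…,x_{m+1}]/(I_{a,1,m} + I_{a,2,m+1}), which is the Stanley–Reisner ring k[Δ(d,m+1)] of the boundary complex of the d-dimensional cyclic polytope with m+1 vertices. -/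
set_option synthInstance.maxHeartbeats 1000000
set_option maxHeartbeats 1000000

/-!
The variable `z` enters `Q = M + (zT - x_1x_m)N` only through `zT`, so setting `z = 0` splits every
element of `M` and of `N` into its constant term and a multiple of `z`. If `zf ∈ Q`, the constant
terms give `x_1x_m n ∈ M` for some `n ∈ N`, and cancelling `z` leaves `f ≡ Tn` modulo `Q`. Now
`M ⊆ L = I_{a-1,2,m-1}`, neither `x_1` nor `x_m` occurs in the generators of `L`, and `TL ⊆ M`;
hence `n ∈ L` and `Tn ∈ M`.

Setting `z = 0` turns `Q` into `M + x_1x_m N` in `k[x_1, …, x_m, T]`. Splitting `I_{a,1,m}` and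
`I_{a,2,m+1}` according to whether a monomial contains its extreme variables shows that this is
`I_{a,1,m} + I_{a,2,m+1}`, where `T` plays the role of `x_{m+1}`.
-/

open MvPolynomial

section Specialization

variable {R : Type*} [CommRing R]

/-- `ρ` sets `z` to zero: it is an endomorphism that kills `z` and is the identity modulo `z`.
An ideal `I` with `I.map ρ = I` is one that is generated by elements free of `z`. -/
structure IsZeroSpecialization (ρ : R →+* R) (z : R) : Prop where
  map_self : ρ z = 0
  dvd_sub : ∀ f, z ∣ f - ρ f

namespace IsZeroSpecialization

variable {ρ : R →+* R} {z : R}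

theorem map_map (hρ : IsZeroSpecialization ρ z) (f : R) : ρ (ρ f) = ρ f := by
  obtain ⟨g, hg⟩ := hρ.dvd_sub f
  have h : ρ (f - ρ f) = 0 := by rw [hg, map_mul, hρ.map_self, zero_mul]
  rw [map_sub, sub_eq_zero] at h
  exact h.symm

theorem exists_eq_add_mul (hρ : IsZeroSpecialization ρ z) {I : Ideal R} (hI : I.map ρ = I)
    {f : R} (hf : f ∈ I) : ∃ g ∈ I, f = ρ f + z * g := by
  have hspan : f ∈ Ideal.span (ρ '' I) := by rwa [← Ideal.map, hI]
  induction hspan using Submodule.span_induction with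
  | mem _ h =>
    obtain ⟨y, -, rfl⟩ := h
    exact ⟨0, zero_mem I, by rw [hρ.map_map, mul_zero, add_zero]⟩
  | zero => exact ⟨0, zero_mem I, by simp⟩
  | add x y hx hy ihx ihy =>
    obtain ⟨x', hx', ex⟩ := ihx (hI ▸ hx)
    obtain ⟨y', hy', ey⟩ := ihy (hI ▸ hy)
    exact ⟨x' + y', add_mem hx' hy', by rw [map_add]; linear_combination ex + ey⟩
  | smul r x hx ihx =>
    have hxI : x ∈ I := hI ▸ hx
    obtain ⟨x', hx', ex⟩ := ihx hxI
    obtain ⟨r', er⟩ := hρ.dvd_sub r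
    refine ⟨r' * x + ρ r * x', add_mem (I.mul_mem_left _ hxI) (I.mul_mem_left _ hx'), ?_⟩
    rw [smul_eq_mul, map_mul]
    linear_combination x * er + ρ r * ex

theorem mem_of_mul_mem (hρ : IsZeroSpecialization ρ z) (hz : IsLeftRegular z) {I : Ideal R}
    (hI : I.map ρ = I) {f : R} (hf : z * f ∈ I) : f ∈ I := by
  obtain ⟨g, hg, e⟩ := hρ.exists_eq_add_mul hI hf
  rw [map_mul, hρ.map_self, zero_mul, zero_add] at e
  rwa [hz e]

theorem mem_sup_of_mul_mem (hρ : IsZeroSpecialization ρ z) (hz : IsLeftRegular z)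
    {M N : Ideal R} (hM : M.map ρ = M) (hN : N.map ρ = N) {T w : R} (hw : ρ w = w)
    (hcolon : ∀ n ∈ N, w * n ∈ M → T * n ∈ M) {f : R}
    (hf : z * f ∈ M ⊔ Ideal.span {z * T - w} * N) : f ∈ M ⊔ Ideal.span {z * T - w} * N := by
  obtain ⟨μ, hμ, _, hν, hsum⟩ := Submodule.mem_sup.1 hf
  obtain ⟨ν, hνN, rfl⟩ := Ideal.mem_span_singleton_mul.1 hν
  obtain ⟨μ', hμ', eμ⟩ := hρ.exists_eq_add_mul hM hμ
  obtain ⟨ν', hν', eν⟩ := hρ.exists_eq_add_mul hN hνN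
  have hconst : ρ μ = w * ρ ν := by
    have h := congrArg ρ hsum
    simp only [map_add, map_mul, map_sub, hρ.map_self, hw] at h
    linear_combination h
  have hρμ : ρ μ ∈ M := hM ▸ Ideal.mem_map_of_mem ρ hμ
  have hρν : ρ ν ∈ N := hN ▸ Ideal.mem_map_of_mem ρ hνN
  have hTν : T * ρ ν ∈ M := hcolon _ hρν (hconst ▸ hρμ)
  have hfe : f = (μ' + T * ρ ν) + (z * T - w) * ν' := by
    apply hz
    linear_combination -hsum + hconst + eμ + (z * T - w) * eν
  rw [hfe]
  exact Submodule.add_mem_sup (add_mem hμ' hTν)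
    (Ideal.mul_mem_mul (Ideal.mem_span_singleton_self _) hν')

end IsZeroSpecialization

end Specialization

/-- For a surjection `π : B → A` with kernel `(z)`, the isomorphism `(B/Q)/(z) ≃ A/π(Q)`. -/
noncomputable def quotQuotSpanSingletonEquiv {R A B : Type*} [CommRing R] [CommRing A]
    [CommRing B] [Algebra R A] [Algebra R B] (π : B →ₐ[R] A) (hπ : Function.Surjective π) {z : B}
    (hker : RingHom.ker π = Ideal.span {z}) (Q : Ideal B) :
    ((B ⧸ Q) ⧸ Ideal.span {Ideal.Quotient.mk Q z}) ≃ₐ[R] A ⧸ Q.map π :=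
  have hspan : Ideal.span {Ideal.Quotient.mk Q z} =
      (Ideal.span {z}).map (Ideal.Quotient.mkₐ R Q) := by
    rw [Ideal.map_span, Set.image_singleton, Ideal.Quotient.mkₐ_eq_mk]
  have hsup : Q ⊔ Ideal.span {z} = RingHom.ker ((Ideal.Quotient.mkₐ R (Q.map π)).comp π) := by
    rw [← AlgHom.comap_ker, ← hker, ← Ideal.comap_map_of_surjective' π hπ]
    exact congrArg (Ideal.comap π) (Ideal.Quotient.mkₐ_ker R _).symm
  ((Ideal.quotientEquivAlgOfEq R hspan).trans
    (DoubleQuot.quotQuotEquivQuotSupₐ R Q (Ideal.span {z}))).trans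
    ((Ideal.quotientEquivAlgOfEq R hsup).trans
      (Ideal.quotientKerAlgEquivOfSurjective
        ((Ideal.Quotient.mkₐ_surjective R (Q.map π)).comp hπ)))

section Variables

variable {R : Type*} [CommRing R] {n : ℕ} (s : Fin (n + 1))

/-- The map `R[x_0, …, x_n] → R[x_0, …, x_{n-1}]` that sets `x_s` to zero and closes the gap in the
numbering of the variables. -/
noncomputable def elimVar : MvPolynomial (Fin (n + 1)) R →ₐ[R] MvPolynomial (Fin n) R :=
  killCompl (Fin.succAbove_right_injective (p := s))

/-- The endomorphism of `R[x_0, …, x_n]` that sets `x_s` to zero. -/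
noncomputable def zeroVar : MvPolynomial (Fin (n + 1)) R →+* MvPolynomial (Fin (n + 1)) R :=
  ((rename s.succAbove).comp (elimVar s) : _ →ₐ[R] _)

theorem elimVar_rename (f : MvPolynomial (Fin n) R) : elimVar s (rename s.succAbove f) = f :=
  killCompl_rename_app _ f

theorem elimVar_surjective : Function.Surjective (elimVar (R := R) s) :=
  fun f => ⟨_, elimVar_rename s f⟩

theorem elimVar_X_self : elimVar s (X s : MvPolynomial (Fin (n + 1)) R) = 0 := by
  simp [elimVar, killCompl]

theorem zeroVar_apply (f : MvPolynomial (Fin (n + 1)) R) :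
    zeroVar s f = rename s.succAbove (elimVar s f) :=
  rfl

theorem isZeroSpecialization_zeroVar :
    IsZeroSpecialization (zeroVar s) (X s : MvPolynomial (Fin (n + 1)) R) where
  map_self := by rw [zeroVar_apply, elimVar_X_self, map_zero]
  dvd_sub f := by
    set q := Ideal.Quotient.mkₐ R (Ideal.span {(X s : MvPolynomial (Fin (n + 1)) R)})
    have hq : q = (q.comp (rename s.succAbove)).comp (elimVar s) := by
      ext i : 1
      rcases Fin.eq_self_or_eq_succAbove s i with rfl | ⟨j, rfl⟩
      · rw [AlgHom.comp_apply, elimVar_X_self, map_zero]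
        exact Ideal.Quotient.eq_zero_iff_mem.2 (Ideal.mem_span_singleton_self _)
      · rw [← rename_X, AlgHom.comp_apply, elimVar_rename, AlgHom.comp_apply]
    rw [← Ideal.mem_span_singleton, ← Ideal.Quotient.eq]
    exact DFunLike.congr_fun hq f

theorem ker_elimVar : RingHom.ker (elimVar (R := R) s) = Ideal.span {X s} := by
  ext f
  rw [RingHom.mem_ker, Ideal.mem_span_singleton]
  refine ⟨fun h => ?_, fun ⟨g, hg⟩ => by rw [hg, map_mul, elimVar_X_self, zero_mul]⟩
  simpa [zeroVar_apply, h] using (isZeroSpecialization_zeroVar s).dvd_sub f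

end Variables

section Xv

variable (k : Type*) [Field k] {n : ℕ}

theorem Xv_add_one (i : Fin n) : Xv k n (i + 1) = X i := by
  rw [Xv, dif_pos ⟨by omega, by omega⟩]
  rfl

theorem Xv_eq_zero {t : ℕ} (h : n < t) : Xv k n t = 0 :=
  dif_neg (by omega)

variable (s : Fin (n + 1))

theorem rename_succAbove_Xv_of_le {t : ℕ} (h : t ≤ s) :
    rename s.succAbove (Xv k n t) = Xv k (n + 1) t := by
  rcases t with _ | t
  · simp [Xv]
  · have hj : (⟨t, by omega⟩ : Fin n).castSucc < s := h
    have e := congrArg (rename s.succAbove) (Xv_add_one k ⟨t, by omega⟩)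
    rw [rename_X, Fin.succAbove_of_castSucc_lt _ _ hj, ← Xv_add_one] at e
    exact e

theorem rename_succAbove_Xv_of_lt {t : ℕ} (h : s < t) :
    rename s.succAbove (Xv k n t) = Xv k (n + 1) (t + 1) := by
  rcases lt_or_ge n t with hn | hn
  · rw [Xv_eq_zero k hn, Xv_eq_zero k (by omega), map_zero]
  · obtain ⟨t, rfl⟩ : ∃ u, t = u + 1 := ⟨t - 1, by omega⟩
    have hj : s ≤ (⟨t, hn⟩ : Fin n).castSucc := Nat.lt_succ_iff.1 h
    have e := congrArg (rename s.succAbove) (Xv_add_one k ⟨t, hn⟩)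
    rw [rename_X, Fin.succAbove_of_le_castSucc _ _ hj, ← Xv_add_one] at e
    exact e

theorem elimVar_Xv_of_le {t : ℕ} (h : t ≤ s) : elimVar s (Xv k (n + 1) t) = Xv k n t := by
  rw [← rename_succAbove_Xv_of_le k s h, elimVar_rename]

theorem elimVar_Xv_of_lt {t : ℕ} (h : s < t) :
    elimVar s (Xv k (n + 1) (t + 1)) = Xv k n t := by
  rw [← rename_succAbove_Xv_of_lt k s h, elimVar_rename]

theorem zeroVar_Xv_of_ne {t : ℕ} (h : t ≠ s + 1) :
    zeroVar s (Xv k (n + 1) t) = Xv k (n + 1) t := by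
  rw [zeroVar_apply]
  rcases Nat.lt_or_gt_of_ne h with h | h
  · rw [elimVar_Xv_of_le k s (by omega), rename_succAbove_Xv_of_le k s (by omega)]
  · obtain ⟨t, rfl⟩ : ∃ u, t = u + 1 := ⟨t - 1, by omega⟩
    rw [elimVar_Xv_of_lt k s (by omega), rename_succAbove_Xv_of_lt k s (by omega)]

end Xv

/-- The index sequences `p ≤ t 0 < ⋯ < t (a - 1) ≤ q` with gaps at least two that define the
generators of `I_{a,p,q}`. Only the first `a` values matter, except that `a = 0` still asks for
`p ≤ t 0 ≤ q`, as in `idealI`. -/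
def IsSparse (a p q : ℕ) (t : ℕ → ℕ) : Prop :=
  p ≤ t 0 ∧ t (a - 1) ≤ q ∧ ∀ j, j + 1 < a → t j + 2 ≤ t (j + 1)

namespace IsSparse

variable {a p q : ℕ} {t : ℕ → ℕ}

theorem le_apply_add (h : IsSparse a p q t) {i j : ℕ} (hij : i + j < a) : t i ≤ t (i + j) := by
  induction j with
  | zero => exact le_rfl
  | succ j ih =>
    have := h.2.2 (i + j) hij
    have := ih (by omega)
    rw [← add_assoc]
    omega

theorem le_apply (h : IsSparse a p q t) {j : ℕ} (hj : j < a) : p ≤ t j := by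
  have := h.le_apply_add (i := 0) (j := j) (by omega)
  rw [zero_add] at this
  exact h.1.trans this

theorem apply_le (h : IsSparse a p q t) {j : ℕ} (hj : j < a) : t j ≤ q := by
  have := h.le_apply_add (i := j) (j := a - 1 - j) (by omega)
  rw [show j + (a - 1 - j) = a - 1 by omega] at this
  exact this.trans h.2.1

theorem init (h : IsSparse (a + 1) p q t) : IsSparse a p q t :=
  ⟨h.1, h.apply_le (by omega), fun j hj => h.2.2 j (by omega)⟩

theorem init_of_apply_le (h : IsSparse (a + 2) p q t) {r : ℕ} (hr : t (a + 1) ≤ r + 2) :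
    IsSparse (a + 1) p r t := by
  have := h.2.2 a (by omega)
  exact ⟨h.1, by rw [Nat.add_sub_cancel]; omega, h.init.2.2⟩

theorem tail (h : IsSparse (a + 2) p q t) : IsSparse (a + 1) (t 0 + 2) q (fun j => t (j + 1)) :=
  ⟨h.2.2 0 (by omega), h.2.1, fun j hj => h.2.2 (j + 1) (by omega)⟩

theorem snoc (h : IsSparse a p q t) :
    IsSparse (a + 1) p (q + 2) (Function.update t a (q + 2)) := by
  obtain ⟨h1, h2, h3⟩ := h
  refine ⟨?_, by simp, fun j hj => ?_⟩
  · rcases a with _ | a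
    · simp only [Function.update_self]
      exact h1.trans (h2.trans (Nat.le_add_right q 2))
    · simpa [Function.update_of_ne] using h1
  · rw [Function.update_of_ne (by omega)]
    rcases eq_or_ne (j + 1) a with rfl | hja
    · simpa using h2
    · rw [Function.update_of_ne hja]
      exact h3 j (by omega)

theorem cons (h : IsSparse a (p + 2) q t) :
    IsSparse (a + 1) p q (fun j => Nat.casesOn j p t) := by
  obtain ⟨h1, h2, h3⟩ := h
  refine ⟨le_rfl, ?_, fun j hj => ?_⟩
  · rcases a with _ | a
    · exact (Nat.le_add_right p 2).trans (h1.trans h2)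
    · exact h2
  · rcases j with _ | j
    · exact h1
    · exact h3 j (by omega)

end IsSparse

section idealI

variable {k : Type*} [Field k] {n a p q : ℕ}

theorem idealI_eq_span_s4 : idealI k n a p q =
    Ideal.span ((fun t => ∏ j ∈ Finset.range a, Xv k n (t j)) '' {t | IsSparse a p q t}) := by
  rw [idealI]
  congr 1
  ext f
  exact ⟨fun ⟨t, h1, h2, h3, hf⟩ => ⟨t, ⟨h1, h2, h3⟩, hf.symm⟩,
    fun ⟨t, ⟨h1, h2, h3⟩, hf⟩ => ⟨t, h1, h2, h3, hf.symm⟩⟩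

theorem idealI_le_iff {J : Ideal (MvPolynomial (Fin n) k)} : idealI k n a p q ≤ J ↔
    ∀ t, IsSparse a p q t → ∏ j ∈ Finset.range a, Xv k n (t j) ∈ J := by
  rw [idealI_eq_span_s4, Ideal.span_le, Set.image_subset_iff]
  rfl

theorem IsSparse.prod_mem {t : ℕ → ℕ} (h : IsSparse a p q t) :
    ∏ j ∈ Finset.range a, Xv k n (t j) ∈ idealI k n a p q :=
  idealI_le_iff.1 le_rfl t h

theorem idealI_mono {p' q' : ℕ} (hp : p' ≤ p) (hq : q ≤ q') :
    idealI k n a p q ≤ idealI k n a p' q' :=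
  idealI_le_iff.2 fun _ h => IsSparse.prod_mem ⟨hp.trans h.1, h.2.1.trans hq, h.2.2⟩

theorem idealI_succ_le : idealI k n (a + 1) p q ≤ idealI k n a p q :=
  idealI_le_iff.2 fun t h => by
    rw [Finset.prod_range_succ]
    exact Ideal.mul_mem_right _ _ h.init.prod_mem

theorem idealI_zero (h : p ≤ q) : idealI k n 0 p q = ⊤ :=
  (Ideal.eq_top_iff_one _).2 (IsSparse.prod_mem (t := fun _ => p) ⟨le_rfl, h, by simp⟩)

theorem map_idealI {n' : ℕ} {F : Type*}
    [FunLike F (MvPolynomial (Fin n) k) (MvPolynomial (Fin n') k)]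
    [RingHomClass F (MvPolynomial (Fin n) k) (MvPolynomial (Fin n') k)] (φ : F)
    (hφ : ∀ t, p ≤ t → t ≤ q → φ (Xv k n t) = Xv k n' t) :
    (idealI k n a p q).map φ = idealI k n' a p q := by
  rw [idealI_eq_span_s4, idealI_eq_span_s4, Ideal.map_span, Set.image_image]
  congr 1
  refine Set.image_congr fun t (ht : IsSparse a p q t) => ?_
  rw [map_prod]
  exact Finset.prod_congr rfl fun j hj =>
    hφ _ (ht.le_apply (Finset.mem_range.1 hj)) (ht.apply_le (Finset.mem_range.1 hj))

theorem span_singleton_mul_idealI_le {x : MvPolynomial (Fin n) k}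
    {J : Ideal (MvPolynomial (Fin n) k)}
    (h : ∀ t, IsSparse a p q t → x * ∏ j ∈ Finset.range a, Xv k n (t j) ∈ J) :
    Ideal.span {x} * idealI k n a p q ≤ J := by
  rw [idealI_eq_span_s4, Ideal.span_mul_span', Set.singleton_mul, Set.image_image, Ideal.span_le,
    Set.image_subset_iff]
  exact h

theorem idealI_succ_eq_sup_last (h : p ≤ q) : idealI k n (a + 1) p (q + 2) =
    idealI k n (a + 1) p (q + 1) ⊔ Ideal.span {Xv k n (q + 2)} * idealI k n a p q := by
  apply le_antisymm
  · refine idealI_le_iff.2 fun t ht => ?_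
    rcases Nat.lt_or_ge (t a) (q + 2) with hlt | hge
    · exact Submodule.mem_sup_left (IsSparse.prod_mem ⟨ht.1, Nat.le_of_lt_succ hlt, ht.2.2⟩)
    · have hta : t a = q + 2 := le_antisymm ht.2.1 hge
      rw [Finset.prod_range_succ, hta, mul_comm _ (Xv k n _)]
      refine Submodule.mem_sup_right (Ideal.mem_span_singleton_mul.2 ⟨_, ?_, rfl⟩)
      rcases a with _ | a
      · rw [idealI_zero h]
        exact Submodule.mem_top
      · exact (ht.init_of_apply_le hta.le).prod_mem
  · refine sup_le (idealI_mono le_rfl (Nat.le_succ _)) (span_singleton_mul_idealI_le fun t ht => ?_)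
    have hprod := ht.snoc.prod_mem (k := k) (n := n)
    rwa [Finset.prod_range_succ, Function.update_self, mul_comm,
      Finset.prod_congr rfl fun j hj =>
        by rw [Function.update_of_ne (Finset.mem_range.1 hj).ne]] at hprod

theorem idealI_succ_eq_sup_first (h : p + 2 ≤ q) : idealI k n (a + 1) p q =
    idealI k n (a + 1) (p + 1) q ⊔ Ideal.span {Xv k n p} * idealI k n a (p + 2) q := by
  apply le_antisymm
  · refine idealI_le_iff.2 fun t ht => ?_
    rcases Nat.lt_or_ge p (t 0) with hlt | hge
    · exact Submodule.mem_sup_left (IsSparse.prod_mem ⟨hlt, ht.2.1, ht.2.2⟩)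
    · have ht0 : t 0 = p := le_antisymm hge ht.1
      rw [Finset.prod_range_succ', ht0, mul_comm _ (Xv k n _)]
      refine Submodule.mem_sup_right (Ideal.mem_span_singleton_mul.2 ⟨_, ?_, rfl⟩)
      rcases a with _ | a
      · rw [idealI_zero h]
        exact Submodule.mem_top
      · exact (ht0 ▸ ht.tail).prod_mem
  · refine sup_le (idealI_mono (Nat.le_succ _) le_rfl) (span_singleton_mul_idealI_le fun t ht => ?_)
    have hprod := ht.cons.prod_mem (k := k) (n := n)
    rwa [Finset.prod_range_succ', mul_comm] at hprod

theorem mem_idealI_of_Xv_mul_mem {t : ℕ} (ht : 1 ≤ t) (htn : t ≤ n) (h : t < p ∨ q < t)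
    {f : MvPolynomial (Fin n) k} (hf : Xv k n t * f ∈ idealI k n a p q) :
    f ∈ idealI k n a p q := by
  obtain ⟨n, rfl⟩ : ∃ n', n = n' + 1 := ⟨n - 1, by omega⟩
  obtain ⟨s, rfl⟩ : ∃ s : Fin (n + 1), t = s + 1 := ⟨⟨t - 1, by omega⟩, by simp; omega⟩
  rw [Xv_add_one] at hf
  exact (isZeroSpecialization_zeroVar s).mem_of_mul_mem isRegular_X.left
    (map_idealI _ fun u _ _ => zeroVar_Xv_of_ne k s (by omega)) hf

end idealI

section Unprojection

/-- The part `I_{a,1,m-1} + I_{a,2,m} + T·I_{a-1,2,m-1}` of the ideal `Q` that is generated by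
monomials, inside `k[x_1, …, x_n]` with `T = x_s`. -/
noncomputable def monomialPart (k : Type*) [Field k] (n s a m : ℕ) :
    Ideal (MvPolynomial (Fin n) k) :=
  idealI k n a 1 (m - 1) ⊔ idealI k n a 2 m ⊔
    Ideal.span {Xv k n s} * idealI k n (a - 1) 2 (m - 1)

/-- The ideal `Q` of `k[x_1, …, x_m, z, T]` that presents the unprojection ring, with `z` and `T`
the last two variables. -/
noncomputable def unprojectionIdeal (k : Type*) [Field k] (a m : ℕ) :
    Ideal (MvPolynomial (Fin (m + 2)) k) :=
  monomialPart k (m + 2) (m + 2) a m ⊔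
    Ideal.span {Xv k (m + 2) (m + 1) * Xv k (m + 2) (m + 2) -
      Xv k (m + 2) 1 * Xv k (m + 2) m} * idealI k (m + 2) (a - 2) 3 (m - 2)

variable {k : Type*} [Field k] {n s a m : ℕ}

theorem monomialPart_le (ha : 2 ≤ a) (hm : 4 ≤ m) :
    monomialPart k n s a m ≤ idealI k n (a - 1) 2 (m - 1) := by
  obtain ⟨a, rfl⟩ := Nat.exists_eq_add_of_le' ha
  obtain ⟨q, rfl⟩ : ∃ q, m = q + 2 := ⟨m - 2, by omega⟩
  refine sup_le (sup_le ?_ ?_) Ideal.mul_le_right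
  · rw [idealI_succ_eq_sup_first (by omega)]
    exact sup_le idealI_succ_le (Ideal.mul_le_right.trans (idealI_mono (by omega) le_rfl))
  · rw [idealI_succ_eq_sup_last (by omega)]
    exact sup_le idealI_succ_le (Ideal.mul_le_right.trans (idealI_mono le_rfl (by omega)))

theorem Xv_mul_mem_monomialPart (ha : 2 ≤ a) (hm : 4 ≤ m) (hmn : m ≤ n)
    {f : MvPolynomial (Fin n) k} (hf : Xv k n 1 * Xv k n m * f ∈ monomialPart k n s a m) :
    Xv k n s * f ∈ monomialPart k n s a m := by
  have hL := monomialPart_le ha hm hf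
  rw [mul_assoc] at hL
  have hfL : f ∈ idealI k n (a - 1) 2 (m - 1) :=
    mem_idealI_of_Xv_mul_mem (by omega) hmn (by omega)
      (mem_idealI_of_Xv_mul_mem le_rfl (by omega) (by omega) hL)
  exact Submodule.mem_sup_right (Ideal.mem_span_singleton_mul.2 ⟨f, hfL, rfl⟩)

theorem map_monomialPart {n' s' : ℕ} {F : Type*}
    [FunLike F (MvPolynomial (Fin n) k) (MvPolynomial (Fin n') k)]
    [RingHomClass F (MvPolynomial (Fin n) k) (MvPolynomial (Fin n') k)] (φ : F)
    (hφ : ∀ t, t ≤ m → φ (Xv k n t) = Xv k n' t) (hs : φ (Xv k n s) = Xv k n' s') :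
    (monomialPart k n s a m).map φ = monomialPart k n' s' a m := by
  have hφ' : ∀ t, t ≤ m - 1 → φ (Xv k n t) = Xv k n' t := fun t h => hφ t (by omega)
  simp only [monomialPart, Ideal.map_sup, Ideal.map_mul, Ideal.map_span, Set.image_singleton, hs]
  rw [map_idealI φ fun t _ => hφ' t, map_idealI φ fun t _ => hφ t, map_idealI φ fun t _ => hφ' t]

theorem monomialPart_sup_eq (ha : 2 ≤ a) (hm : 5 ≤ m) :
    monomialPart k n (m + 1) a m ⊔
      Ideal.span {Xv k n 1 * Xv k n m} * idealI k n (a - 2) 3 (m - 2) =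
    idealI k n a 1 m ⊔ idealI k n a 2 (m + 1) := by
  obtain ⟨a, rfl⟩ := Nat.exists_eq_add_of_le' ha
  obtain ⟨q, rfl⟩ : ∃ q, m = q + 2 := ⟨m - 2, by omega⟩
  have hJ₁ : idealI k n (a + 2) 1 (q + 2) = idealI k n (a + 2) 1 (q + 1) ⊔
      (Ideal.span {Xv k n (q + 2)} * idealI k n (a + 1) 2 q ⊔
        Ideal.span {Xv k n 1 * Xv k n (q + 2)} * idealI k n a 3 q) := by
    rw [idealI_succ_eq_sup_last (by omega), idealI_succ_eq_sup_first (q := q) (by omega),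
      Ideal.mul_sup, ← mul_assoc, Ideal.span_singleton_mul_span_singleton, mul_comm (Xv k n 1)]
  have hJ₂ : idealI k n (a + 2) 2 (q + 3) = idealI k n (a + 2) 2 (q + 2) ⊔
      Ideal.span {Xv k n (q + 3)} * idealI k n (a + 1) 2 (q + 1) :=
    idealI_succ_eq_sup_last (by omega)
  have habsorb : Ideal.span {Xv k n (q + 2)} * idealI k n (a + 1) 2 q ⊔
      idealI k n (a + 2) 2 (q + 2) = idealI k n (a + 2) 2 (q + 2) := by
    rw [sup_eq_right, idealI_succ_eq_sup_last (q := q) (by omega)]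
    exact le_sup_right
  change idealI k n (a + 2) 1 (q + 1) ⊔ idealI k n (a + 2) 2 (q + 2) ⊔
      Ideal.span {Xv k n (q + 3)} * idealI k n (a + 1) 2 (q + 1) ⊔
      Ideal.span {Xv k n 1 * Xv k n (q + 2)} * idealI k n a 3 q = _
  rw [hJ₁, hJ₂, ← habsorb]
  ac_rfl

theorem mem_unprojectionIdeal_of_z_mul_mem (ha : 2 ≤ a) (hm : 4 ≤ m)
    {f : MvPolynomial (Fin (m + 2)) k}
    (hf : Xv k (m + 2) (m + 1) * f ∈ unprojectionIdeal k a m) : f ∈ unprojectionIdeal k a m := by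
  set z : Fin (m + 2) := (Fin.last m).castSucc
  have hfix {t : ℕ} (ht : t ≠ m + 1) : zeroVar z (Xv k (m + 2) t) = Xv k (m + 2) t :=
    zeroVar_Xv_of_ne k z ht
  have hz : Xv k (m + 2) (m + 1) = X z := Xv_add_one k z
  rw [unprojectionIdeal, hz] at hf ⊢
  refine (isZeroSpecialization_zeroVar z).mem_sup_of_mul_mem isRegular_X.left ?_ ?_ ?_ ?_ hf
  · exact map_monomialPart _ (fun t ht => hfix (by omega)) (hfix (by omega))
  · exact map_idealI _ fun t _ ht => hfix (by omega)
  · rw [map_mul, hfix (by omega), hfix (by omega)]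
  · exact fun g _ => Xv_mul_mem_monomialPart ha hm (by omega)

theorem map_elimVar_unprojectionIdeal (ha : 2 ≤ a) (hm : 5 ≤ m) :
    (unprojectionIdeal k a m).map (elimVar (R := k) (Fin.last m).castSucc) =
      idealI k (m + 1) a 1 m ⊔ idealI k (m + 1) a 2 (m + 1) := by
  set z : Fin (m + 2) := (Fin.last m).castSucc
  have hx {t : ℕ} (ht : t ≤ m) : elimVar z (Xv k (m + 2) t) = Xv k (m + 1) t :=
    elimVar_Xv_of_le k z ht
  have hT : elimVar z (Xv k (m + 2) (m + 2)) = Xv k (m + 1) (m + 1) :=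
    elimVar_Xv_of_lt k z (Nat.lt_succ_self m)
  have hz : elimVar z (Xv k (m + 2) (m + 1)) = 0 := by
    rw [show Xv k (m + 2) (m + 1) = X z from Xv_add_one k z, elimVar_X_self]
  rw [unprojectionIdeal, Ideal.map_sup, map_monomialPart _ (fun _ => hx) hT, Ideal.map_mul,
    map_idealI _ fun t _ ht => hx (show t ≤ m by omega), Ideal.map_span, Set.image_singleton,
    map_sub, map_mul, map_mul, hz, hx (t := 1) (by omega), hx le_rfl, zero_mul, zero_sub,
    Ideal.span_singleton_neg, monomialPart_sup_eq ha hm]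

end Unprojection

theorem unprojection_cyclic_even_general (k : Type*) [Field k] (a m : ℕ) (ha : 2 ≤ a) (hm : 5 ≤ m)
    (Q : Ideal (MvPolynomial (Fin (m + 2)) k))
    (hQ : Q = idealI k (m + 2) a 1 (m - 1) + idealI k (m + 2) a 2 m +
      Ideal.span {Xv k (m + 2) (m + 2)} * idealI k (m + 2) (a - 1) 2 (m - 1) +
      Ideal.span {Xv k (m + 2) (m + 1) * Xv k (m + 2) (m + 2) -
        Xv k (m + 2) 1 * Xv k (m + 2) m} * idealI k (m + 2) (a - 2) 3 (m - 2)) :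
    Ideal.Quotient.mk Q (Xv k (m + 2) (m + 1)) ∈
      nonZeroDivisors (MvPolynomial (Fin (m + 2)) k ⧸ Q) ∧
    Nonempty (((MvPolynomial (Fin (m + 2)) k ⧸ Q) ⧸
        Ideal.span {Ideal.Quotient.mk Q (Xv k (m + 2) (m + 1))}) ≃ₐ[k]
      (MvPolynomial (Fin (m + 1)) k ⧸
        (idealI k (m + 1) a 1 m + idealI k (m + 1) a 2 (m + 1)))) := by
  obtain rfl : Q = unprojectionIdeal k a m := hQ
  set z : Fin (m + 2) := (Fin.last m).castSucc
  have hz : Xv k (m + 2) (m + 1) = X z := Xv_add_one k z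
  constructor
  · refine mem_nonZeroDivisors_iff_right.2 fun x hx => ?_
    obtain ⟨f, rfl⟩ := Ideal.Quotient.mk_surjective x
    rw [mul_comm, ← map_mul, Ideal.Quotient.eq_zero_iff_mem] at hx
    exact Ideal.Quotient.eq_zero_iff_mem.2
      (mem_unprojectionIdeal_of_z_mul_mem ha (by omega) hx)
  · rw [hz]
    exact ⟨(quotQuotSpanSingletonEquiv (elimVar z) (elimVar_surjective z) (ker_elimVar z) _).trans
      (Ideal.quotientEquivAlgOfEq k (map_elimVar_unprojectionIdeal ha hm))⟩

/-- Main theorem, `d` even case. Let `d ≥ 4` be even, `d + 1 < m`, `a = (d+2)/2`. In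
`k[x_1,…,x_m,z,T]` (with `z, T` the last two variables) let
`Q = I_{a,1,m−1} + I_{a,2,m} + T·I_{a−1,2,m−1} + (zT − x_1x_m)·I_{a−2,3,m−2}` and
`S = k[x_1,…,x_m,z,T]/Q`. Then the image of `z` in `S` is a non-zero-divisor, and
`S/(z) ≅ k[x_1,…,x_{m+1}]/(I_{a,1,m} + I_{a,2,m+1}) = k[Δ(d,m+1)]` as `k`-algebras. -/
theorem unprojection_cyclic_even (k : Type*) [Field k] (d m : ℕ)
    (hd : Even d) (hd4 : 4 ≤ d) (hm : d + 1 < m) (a : ℕ) (ha : a = (d + 2) / 2)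
    (Q : Ideal (MvPolynomial (Fin (m + 2)) k))
    (hQ : Q = idealI k (m + 2) a 1 (m - 1) + idealI k (m + 2) a 2 m +
      Ideal.span {Xv k (m + 2) (m + 2)} * idealI k (m + 2) (a - 1) 2 (m - 1) +
      Ideal.span {Xv k (m + 2) (m + 1) * Xv k (m + 2) (m + 2) -
        Xv k (m + 2) 1 * Xv k (m + 2) m} * idealI k (m + 2) (a - 2) 3 (m - 2)) :
    Ideal.Quotient.mk Q (Xv k (m + 2) (m + 1)) ∈
      nonZeroDivisors (MvPolynomial (Fin (m + 2)) k ⧸ Q) ∧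
    Nonempty (((MvPolynomial (Fin (m + 2)) k ⧸ Q) ⧸
        Ideal.span {Ideal.Quotient.mk Q (Xv k (m + 2) (m + 1))}) ≃ₐ[k]
      (MvPolynomial (Fin (m + 1)) k ⧸
        (idealI k (m + 1) a 1 m + idealI k (m + 1) a 2 (m + 1)))) :=
  unprojection_cyclic_even_general k a m (by omega) (by omega) Q hQ
end
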